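/- arXiv:2406.18325 — 3 statements merged into one kernel-verified Lean document; each statement's English description precedes it below -/
import Mathlib

section
/- Let c₁, c₂, c₃ ∈ 𝔽_p and N(c₁,c₂,c₃) = #{(a,b) ∈ 𝔽_q × 𝔽_q : Tr(a²) = c₁, Tr(b²) = c₂ and Tr(ab) = c₃}. If m is odd, then (as complex numbers): N = p^{2m−3} + p^{m−3}(p−1)(2p−1) − p^{−4}(p−1)²G²Ḡ² if c₁ = c₂ = c₃ = 0; N = p^{2m−3} − p^{m−3}(2p−1) + p^{−4}(p−1)G²Ḡ² if c₁ = c₂ = 0 and c₃ ≠ 0; N = p^{2m−3} + p^{m−3}(p−1)² + p^{−4}(p−1)G²Ḡ² + p^{m−2}η̄(−c₂)GḠ if c₂ ≠ 0 and c₁ = c₃ = 0; N = p^{2m−3} + p^{m−3}(p−1)² + p^{−4}(p−1)G²Ḡ² + p^{m−2}η̄(−c₁)GḠ if c₁ ≠ 0 and c₂ = c₃ = 0; N = p^{2m−3} − p^{m−3}(p−1) − p^{−4}G²Ḡ² if exactly two of c₁, c₂, c₃ are nonzero; N = p^{2m−3} + p^{m−3} + p^{−4}(p²−p−1)G²Ḡ²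 + p^{m−3}(η̄(−c₁)(p−1) + η̄(−c₂))GḠ if all c_i ≠ 0 and c₃² − c₁c₂ = 0; and N = p^{2m−3} + p^{m−3} − p^{−4}(p+1)G²Ḡ² if all c_i ≠ 0 and c₃² − c₁c₂ ≠ 0. -/
open Finset
open scoped Classical

noncomputable section

/-- `ζ_p = exp(2πi/p)`. -/
def zeta (p : ℕ) : ℂ := Complex.exp (2 * Real.pi * Complex.I / p)

/-- The canonical additive character of `ℤ/p`: `χ̄₁(c) = ζ_p^c`. -/
def chiBar (p : ℕ) (c : ZMod p) : ℂ := zeta p ^ c.val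

/-- The quadratic character of `(ℤ/p)^*`, extended by `η̄(0) = 0`. -/
def etaBar (p : ℕ) (c : ZMod p) : ℂ :=
  if c = 0 then 0 else if IsSquare c then 1 else -1

/-- The quadratic character of `F^*`, extended by `η(0) = 0`. -/
def etaQ (F : Type) [Field F] (x : F) : ℂ :=
  if x = 0 then 0 else if IsSquare x then 1 else -1

/-- The absolute trace map from `F` to `ℤ/p`. -/
def Trq (p : ℕ) (F : Type) [Field F] [Algebra (ZMod p) F] (x : F) : ZMod p :=
  Algebra.trace (ZMod p) F x

/-- The canonical additive character of `F`: `χ₁(x) = ζ_p^{Tr x}`. -/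
def chiQ (p : ℕ) (F : Type) [Field F] [Algebra (ZMod p) F] (x : F) : ℂ :=
  chiBar p (Trq p F x)

/-- The quadratic Gauss sum `G` over `F`. -/
def GaussQ (p : ℕ) (F : Type) [Field F] [Fintype F] [Algebra (ZMod p) F] : ℂ :=
  ∑ x ∈ univ.filter (fun x : F => x ≠ 0), etaQ F x * chiQ p F x

/-- The quadratic Gauss sum `Ḡ` over `ℤ/p`. -/
def GaussP (p : ℕ) [NeZero p] : ℂ :=
  ∑ y ∈ univ.filter (fun y : ZMod p => y ≠ 0), etaBar p y * chiBar p y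

theorem aux_sqsum {K : Type} [Field K] [Fintype K] [DecidableEq K] (hK : ringChar K ≠ 2)
    (ψ : AddChar K ℂ) (hψ : ψ.IsPrimitive) (t : K) :
    ∑ a : K, ψ (t * a ^ 2) = (if t = 0 then (Fintype.card K : ℂ) else 0)
      + ((quadraticChar K t : ℤ) : ℂ) * ∑ u : K, ((quadraticChar K u : ℤ) : ℂ) * ψ u := by
  have h1 : ∑ a : K, ψ (t * a ^ 2) =
      ∑ u : K, (((quadraticChar K u : ℤ) : ℂ) + 1) * ψ (t * u) := by
    rw [← Finset.sum_fiberwise (s := Finset.univ) (g := fun a : K => a ^ 2)]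
    refine Finset.sum_congr rfl fun u _ => ?_
    have h2 := quadraticChar_card_sqrts hK u
    have h3 : {x : K | x ^ 2 = u}.toFinset = Finset.univ.filter (fun x : K => x ^ 2 = u) := by
      ext x; simp
    rw [h3] at h2
    rw [Finset.sum_congr rfl (g := fun _ => ψ (t * u))]
    · rw [Finset.sum_const, nsmul_eq_mul]
      have h4 := congrArg (fun n : ℤ => (n : ℂ)) h2
      push_cast at h4
      rw [h4]
    · intro x hx
      rw [Finset.mem_filter] at hx
      rw [hx.2]
  rw [h1]
  simp only [add_mul, one_mul, Finset.sum_add_distrib]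
  have h5 : ∑ u : K, ψ (t * u) = if t = 0 then (Fintype.card K : ℂ) else 0 := by
    have := AddChar.sum_mulShift t hψ
    simp only [mul_comm _ t] at this
    rw [this]
    split_ifs <;> simp
  rw [h5, add_comm]
  congr 1
  by_cases ht : t = 0
  · subst ht
    simp only [zero_mul, AddChar.map_zero_eq_one, mul_one, MulChar.map_zero, Int.cast_zero]
    exact_mod_cast quadraticChar_sum_zero hK
  · rw [Finset.mul_sum]
    have ht2 : ((quadraticChar K t : ℤ) : ℂ) * ((quadraticChar K t : ℤ) : ℂ) = 1 := by
      have := quadraticChar_sq_one ht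
      rw [sq] at this
      exact_mod_cast this
    rw [← Equiv.sum_comp (Equiv.mulLeft₀ t ht) (fun u => ((quadraticChar K t : ℤ) : ℂ) *
      (((quadraticChar K u : ℤ) : ℂ) * ψ u))]
    refine Finset.sum_congr rfl fun u _ => ?_
    simp only [Equiv.mulLeft₀_apply, map_mul, Int.cast_mul]
    linear_combination (- ((quadraticChar K u : ℤ) : ℂ) * ψ (t * u)) * ht2

theorem aux_shift {K : Type} [Field K] [Fintype K] [DecidableEq K] (hK : ringChar K ≠ 2)
    (ψ : AddChar K ℂ) (u v : K) (hu : u ≠ 0) (w : K) :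
    ∑ a : K, ψ (u * a ^ 2 + v * a + w) = ψ (w - v ^ 2 / (4 * u)) * ∑ a : K, ψ (u * a ^ 2) := by
  have h2 : (2 : K) ≠ 0 := Ring.two_ne_zero hK
  rw [← Equiv.sum_comp (Equiv.addRight (v / (2 * u))) (fun a => ψ (u * a ^ 2)), Finset.mul_sum]
  refine Finset.sum_congr rfl fun a _ => ?_
  rw [← AddChar.map_add_eq_mul]
  congr 1
  have h4 : (4 : K) ≠ 0 := by
    have : (4 : K) = 2 * 2 := by norm_num
    rw [this]; exact mul_ne_zero h2 h2
  simp only [Equiv.coe_addRight]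
  field_simp
  ring

theorem aux_gauss_sq {K : Type} [Field K] [Fintype K] [DecidableEq K] (hK : ringChar K ≠ 2)
    (ψ : AddChar K ℂ) (hψ : ψ.IsPrimitive) :
    (∑ u : K, ((quadraticChar K u : ℤ) : ℂ) * ψ u) ^ 2
      = ((quadraticChar K (-1) : ℤ) : ℂ) * (Fintype.card K : ℂ) := by
  have h := gaussSum_sq (χ := (quadraticChar K).ringHomComp (Int.castRingHom ℂ))
    (by
      intro h
      apply quadraticChar_ne_one hK
      ext a
      have := congrArg (fun f : MulChar K ℂ => f a) h
      simp only [MulChar.ringHomComp_apply, MulChar.one_apply_coe] at this ⊢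
      have h' : ((quadraticChar K a : ℤ) : ℂ) = ((1 : ℤ) : ℂ) := by simpa using this
      exact Int.cast_injective h')
    ((quadraticChar_isQuadratic K).comp _) hψ
  simpa [gaussSum, MulChar.ringHomComp_apply] using h

theorem aux_restrict (p m : ℕ) [Fact (Nat.Prime p)] (hp : Odd p)
    (F : Type) [Field F] [Fintype F] [DecidableEq F] [Algebra (ZMod p) F]
    (hq : Fintype.card F = p ^ m) (hF : ringChar F ≠ 2) (hZ : ringChar (ZMod p) ≠ 2)
    (hmodd : Odd m) (t : ZMod p) :
    quadraticChar F (algebraMap (ZMod p) F t) = quadraticChar (ZMod p) t := by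
  by_cases ht : t = 0
  · subst ht; simp
  have h1 := quadraticChar_eq_pow_of_char_ne_two' hF (algebraMap (ZMod p) F t)
  have h2 := quadraticChar_eq_pow_of_char_ne_two' hZ t
  rw [hq] at h1
  rw [ZMod.card] at h2
  have hpp : 2 ≤ p := (Fact.out : Nat.Prime p).two_le
  obtain ⟨k, hk, hk'⟩ : ∃ k, Odd k ∧ p ^ m / 2 = p / 2 * k := by
    refine ⟨∑ i ∈ Finset.range m, p ^ i, ?_, ?_⟩
    · rw [Finset.odd_sum_iff_odd_card_odd]
      have : (Finset.range m).filter (fun x => Odd (p ^ x)) = Finset.range m :=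
        Finset.filter_true_of_mem fun i _ => hp.pow
      rw [this]; simpa using hmodd
    · obtain ⟨r, hr⟩ := hp
      have hr2 : p / 2 = r := by omega
      have hr3 : p - 1 = 2 * r := by omega
      have hg' := geom_sum_mul_add (p - 1) m
      rw [Nat.sub_add_cancel (by omega), hr3] at hg'
      rw [← hg', hr2]
      set k := ∑ i ∈ Finset.range m, p ^ i
      have : k * (2 * r) + 1 = 2 * (r * k) + 1 := by ring
      omega
  rw [hk', pow_mul, ← map_pow, ← h2] at h1
  have hd := quadraticChar_dichotomy ht
  have hF1 : (1 : F) ≠ -1 := fun h => Ring.neg_one_ne_one_of_char_ne_two hF h.symm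
  have hd' := quadraticChar_dichotomy (F := F) (a := algebraMap (ZMod p) F t) (by simpa using ht)
  rcases hd with hd | hd <;> rcases hd' with hd' | hd' <;> rw [hd, hd'] at h1 ⊢ <;>
    simp [hk.neg_one_pow, hF1, hF1.symm] at h1 ⊢

/-- The three-parameter exponential sum. -/
def expS {k F : Type} [Field k] [Field F] [Fintype F] [Algebra k F] (ψ : AddChar F ℂ)
    (x y z : k) : ℂ :=
  ∑ a : F, ∑ b : F, ψ (algebraMap k F x * a ^ 2 + algebraMap k F y * b ^ 2
    + algebraMap k F z * (a * b))

theorem expS_ne {k F : Type} [Field k] [Field F] [Fintype F] [DecidableEq F] [Algebra k F]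
    (hF : ringChar F ≠ 2) (ψ : AddChar F ℂ) (x y z : k) (hx : x ≠ 0) :
    expS ψ x y z = (∑ a : F, ψ (algebraMap k F x * a ^ 2)) *
      ∑ a : F, ψ (algebraMap k F (y - z ^ 2 / (4 * x)) * a ^ 2) := by
  unfold expS
  rw [Finset.sum_comm, Finset.mul_sum]
  refine Finset.sum_congr rfl fun b _ => ?_
  have hx' : algebraMap k F x ≠ 0 := by simpa using hx
  have h := aux_shift hF ψ (algebraMap k F x) (algebraMap k F z * b) hx'
    (algebraMap k F y * b ^ 2)
  have h1 : algebraMap k F y * b ^ 2 - (algebraMap k F z * b) ^ 2 / (4 * algebraMap k F x)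
      = algebraMap k F (y - z ^ 2 / (4 * x)) * b ^ 2 := by
    simp only [map_sub, map_div₀, map_pow, map_mul, map_ofNat]
    ring
  rw [h1] at h
  refine Eq.trans ?_ (h.trans (mul_comm _ _))
  refine Finset.sum_congr rfl fun a _ => ?_
  congr 1; ring

theorem expS_zero {k F : Type} [Field k] [Field F] [Fintype F] [DecidableEq F] [DecidableEq k]
    [Algebra k F]
    (ψ : AddChar F ℂ) (hψ : ψ.IsPrimitive) (y z : k) :
    expS ψ 0 y z = (Fintype.card F : ℂ) * (if z = 0 then
      ∑ a : F, ψ (algebraMap k F y * a ^ 2) else 1) := by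
  unfold expS
  simp only [map_zero, zero_mul, zero_add]
  split_ifs with hz
  · subst hz
    simp
  · rw [Finset.sum_comm]
    have hz' : algebraMap k F z ≠ 0 := by simpa using hz
    have key : ∀ b : F, ∑ a : F, ψ (algebraMap k F y * b ^ 2 + algebraMap k F z * (a * b))
        = if b = 0 then (Fintype.card F : ℂ) else 0 := by
      intro b
      have := AddChar.sum_mulShift (algebraMap k F z * b) hψ
      simp only [AddChar.map_add_eq_mul, ← Finset.mul_sum]
      have e : ∀ a : F, algebraMap k F z * (a * b) = a * (algebraMap k F z * b) := by
        intro a; ring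
      simp only [e, this]
      by_cases hb : b = 0 <;> simp [hb, hz]
    simp [key]

theorem sum_rotate {B X : Type} [Fintype B] [Fintype X] (f : B → X → X → X → ℂ) :
    ∑ b, ∑ x, ∑ y, ∑ z, f b x y z = ∑ x, ∑ y, ∑ z, ∑ b, f b x y z := by
  rw [Finset.sum_comm]
  refine Finset.sum_congr rfl fun x _ => ?_
  rw [Finset.sum_comm]
  refine Finset.sum_congr rfl fun y _ => ?_
  exact Finset.sum_comm

theorem core (p m : ℕ) [Fact (Nat.Prime p)] (hp : Odd p)
    (F : Type) [Field F] [Fintype F] [DecidableEq F] [Algebra (ZMod p) F]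
    (hq : Fintype.card F = p ^ m) (hF : ringChar F ≠ 2) (hZ : ringChar (ZMod p) ≠ 2)
    (hmodd : Odd m) (e : AddChar (ZMod p) ℂ) (he : e.IsPrimitive) (ψ : AddChar F ℂ)
    (hψ : ψ.IsPrimitive) (tr : F →ₗ[ZMod p] ZMod p) (htr : ∀ x, ψ x = e (tr x))
    (c₁ c₂ c₃ : ZMod p) (G Gb : ℂ) (η : ZMod p → ℂ)
    (hη : ∀ t, η t = ((quadraticChar (ZMod p) t : ℤ) : ℂ))
    (hG : G = ∑ u : F, ((quadraticChar F u : ℤ) : ℂ) * ψ u)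
    (hGb : Gb = ∑ u : ZMod p, ((quadraticChar (ZMod p) u : ℤ) : ℂ) * e u) (N : ℕ)
    (hN : N = (univ.filter (fun ab : F × F =>
      tr (ab.1 ^ 2) = c₁ ∧ tr (ab.2 ^ 2) = c₂ ∧ tr (ab.1 * ab.2) = c₃)).card) :
    (p : ℂ) ^ 3 * N = if c₂ = 0 then
        (p : ℂ) ^ m * p * ((if c₃ = 0 then (p : ℂ) else 0) - 1) + ((p : ℂ) ^ m) ^ 2
          + (p : ℂ) ^ m * p * (if c₃ = 0 then G * Gb * η (-c₁) else 0)
      else ((p : ℂ) ^ m + G * Gb * η (-c₂)) * ((p : ℂ) ^ m + G * Gb * η (-c₂) *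
          ((if c₃ ^ 2 - c₁ * c₂ = 0 then (p : ℂ) else 0) - 1)) := by
  have hcard : (Fintype.card F : ℂ) = (p : ℂ) ^ m := by rw [hq]; push_cast; rfl
  have hη0 : η 0 = 0 := by rw [hη]; simp
  have hηmul : ∀ s t, η (s * t) = η s * η t := by intro s t; simp only [hη, map_mul, Int.cast_mul]
  have hηsq : ∀ s, s ≠ 0 → η s * η s = 1 := by
    intro s hs
    rw [hη]
    have := quadraticChar_sq_one hs
    rw [sq] at this
    exact_mod_cast this
  -- the quadratic sum over F
  have hg : ∀ t : ZMod p, ∑ a : F, ψ (algebraMap (ZMod p) F t * a ^ 2)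
      = (if t = 0 then (p : ℂ) ^ m else 0) + η t * G := by
    intro t
    rw [aux_sqsum hF ψ hψ, aux_restrict p m hp F hq hF hZ hmodd, hη, hG, hcard]
    simp
  -- orthogonality
  have horth : ∀ t : ZMod p, ∑ x : ZMod p, e (x * t) = if t = 0 then (p : ℂ) else 0 := by
    intro t
    rw [AddChar.sum_mulShift t he, ZMod.card]
    split_ifs <;> simp
  -- Gauss sums over F_p
  have hgs : ∀ t : ZMod p, ∑ x : ZMod p, η x * e (x * t) = η t * Gb := by
    intro t
    by_cases ht : t = 0
    · subst ht
      simp only [mul_zero, AddChar.map_zero_eq_one, mul_one, hη0, zero_mul, hη]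
      exact_mod_cast quadraticChar_sum_zero hZ
    · rw [hGb, Finset.mul_sum, ← Equiv.sum_comp (Equiv.mulRight₀ t ht) (fun u => η t *
        (((quadraticChar (ZMod p) u : ℤ) : ℂ) * e u))]
      refine Finset.sum_congr rfl fun u _ => ?_
      simp only [Equiv.mulRight₀_apply, ← hη, hηmul]
      linear_combination (- η u * e (u * t)) * hηsq t ht
  -- step 1
  have hstep1 : (p : ℂ) ^ 3 * N = ∑ x : ZMod p, ∑ y : ZMod p, ∑ z : ZMod p,
      e (-(x * c₁) - y * c₂ - z * c₃) * expS ψ x y z := by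
    have h1 : (p : ℂ) ^ 3 * N = ∑ a : F, ∑ b : F,
        (∑ x : ZMod p, e (x * (tr (a ^ 2) - c₁))) * (∑ y : ZMod p, e (y * (tr (b ^ 2) - c₂)))
        * (∑ z : ZMod p, e (z * (tr (a * b) - c₃))) := by
      simp only [horth, sub_eq_zero]
      rw [hN, Finset.card_filter, ← Finset.univ_product_univ, Finset.sum_product]
      push_cast
      rw [Finset.mul_sum]
      refine Finset.sum_congr rfl fun a _ => ?_
      rw [Finset.mul_sum]
      refine Finset.sum_congr rfl fun b _ => ?_
      by_cases h1 : tr (a ^ 2) = c₁ <;> by_cases h2 : tr (b ^ 2) = c₂ <;>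
        by_cases h3 : tr (a * b) = c₃ <;> simp [h1, h2, h3]
      ring
    have h2 : ∀ a b : F, (∑ x : ZMod p, e (x * (tr (a ^ 2) - c₁))) *
        (∑ y : ZMod p, e (y * (tr (b ^ 2) - c₂)))
        * (∑ z : ZMod p, e (z * (tr (a * b) - c₃))) = ∑ x : ZMod p, ∑ y : ZMod p, ∑ z : ZMod p,
        e (-(x * c₁) - y * c₂ - z * c₃) * ψ (algebraMap (ZMod p) F x * a ^ 2
          + algebraMap (ZMod p) F y * b ^ 2 + algebraMap (ZMod p) F z * (a * b)) := by
      intro a b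
      rw [Finset.sum_mul_sum, Finset.sum_mul]
      refine Finset.sum_congr rfl fun x _ => ?_
      rw [Finset.sum_mul]
      refine Finset.sum_congr rfl fun y _ => ?_
      rw [Finset.mul_sum]
      refine Finset.sum_congr rfl fun z _ => ?_
      rw [htr, ← AddChar.map_add_eq_mul, ← AddChar.map_add_eq_mul, ← AddChar.map_add_eq_mul]
      congr 1
      simp only [← Algebra.smul_def, map_add, map_smul, smul_eq_mul]
      ring
    rw [h1]
    simp only [h2]
    unfold expS
    simp only [Finset.mul_sum]
    rw [Finset.sum_congr rfl (fun a _ => sum_rotate _)]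
    exact sum_rotate _
  have hA : ∑ y : ZMod p, e (-(y * c₂)) * ((if y = 0 then (p : ℂ) ^ m else 0) + η y * G)
      = (p : ℂ) ^ m + G * Gb * η (-c₂) := by
    have h1 := hgs (-c₂)
    simp only [mul_add, Finset.sum_add_distrib]
    congr 1
    · simp
    · rw [mul_assoc, mul_comm Gb, ← h1, Finset.mul_sum]
      refine Finset.sum_congr rfl fun y _ => ?_
      rw [mul_neg]; ring
  -- x = 0
  have hT0 : ∑ y : ZMod p, ∑ z : ZMod p, e (-(0 * c₁) - y * c₂ - z * c₃) * expS ψ 0 y z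
      = (p : ℂ) ^ m * (if c₂ = 0 then (p : ℂ) else 0) * ((if c₃ = 0 then (p : ℂ) else 0) - 1)
        + (p : ℂ) ^ m * ((p : ℂ) ^ m + G * Gb * η (-c₂)) := by
    have h1 : ∀ y z : ZMod p, e (-(0 * c₁) - y * c₂ - z * c₃) * expS ψ 0 y z
        = (p : ℂ) ^ m * (e (y * (-c₂)) * e (z * (-c₃))) + (p : ℂ) ^ m * (if z = 0 then
          (e (-(y * c₂)) * ((if y = 0 then (p : ℂ) ^ m else 0) + η y * G) - e (y * (-c₂)))
          else 0) := by
      intro y z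
      rw [expS_zero ψ hψ, hg, hcard]
      have h0 : -(0 * c₁) - y * c₂ - z * c₃ = y * (-c₂) + z * (-c₃) := by ring
      rw [h0, AddChar.map_add_eq_mul]
      split_ifs with hz hy <;> simp [hz] <;> ring
    simp only [h1, Finset.sum_add_distrib, ← Finset.mul_sum, Finset.sum_ite_eq', Finset.mem_univ,
      if_true, Finset.sum_sub_distrib, hA, horth, neg_eq_zero, ← Finset.sum_mul]
    ring
  -- inner sums for x ≠ 0
  have hT1 : ∀ x : ZMod p, x ≠ 0 →
      ∑ y : ZMod p, ∑ z : ZMod p, e (-(x * c₁) - y * c₂ - z * c₃) * expS ψ x y z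
      = ((p : ℂ) ^ m + G * Gb * η (-c₂)) * G * (if c₂ = 0 then (if c₃ = 0 then (p : ℂ) else 0) *
        (η x * e (x * (-c₁))) else Gb * η (-c₂) * e (x * (c₃ ^ 2 / c₂ - c₁))) := by
    intro x hx
    have h4 : (4 : ZMod p) ≠ 0 := by
      have h2 : (2 : ZMod p) ≠ 0 := Ring.two_ne_zero hZ
      have : (4 : ZMod p) = 2 * 2 := by norm_num
      rw [this]; exact mul_ne_zero h2 h2
    have hη4 : η 4 = 1 := by
      have h2 : (2 : ZMod p) ≠ 0 := Ring.two_ne_zero hZ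
      have : (4 : ZMod p) = 2 * 2 := by norm_num
      rw [this, hηmul, hηsq _ h2]
    rw [Finset.sum_comm]
    have h1 : ∀ z : ZMod p, ∑ y : ZMod p, e (-(x * c₁) - y * c₂ - z * c₃) * expS ψ x y z
        = ((p : ℂ) ^ m + G * Gb * η (-c₂)) * G * η x *
          e (-c₂ / (4 * x) * z ^ 2 + (-c₃) * z + (-(x * c₁))) := by
      intro z
      rw [← hA, ← Equiv.sum_comp (Equiv.addRight (z ^ 2 / (4 * x))), Finset.sum_mul,
        Finset.sum_mul, Finset.sum_mul]
      refine Finset.sum_congr rfl fun y _ => ?_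
      rw [expS_ne hF ψ _ _ _ hx, hg, hg, Equiv.coe_addRight, add_sub_cancel_right, if_neg hx]
      have : -(x * c₁) - (y + z ^ 2 / (4 * x)) * c₂ - z * c₃ = -(y * c₂) +
        (-c₂ / (4 * x) * z ^ 2 + (-c₃) * z + (-(x * c₁))) := by ring
      rw [this, AddChar.map_add_eq_mul]
      ring
    simp only [h1, ← Finset.mul_sum]
    by_cases hc2 : c₂ = 0
    · subst hc2
      simp only [neg_zero, zero_div, zero_mul, zero_add, if_true, AddChar.map_add_eq_mul,
        ← Finset.sum_mul]
      have := horth (-c₃)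
      simp only [mul_comm _ (-c₃), neg_eq_zero] at this
      rw [this, mul_neg]
      ring
    · have hu : -c₂ / (4 * x) ≠ 0 :=
        div_ne_zero (neg_ne_zero.mpr hc2) (mul_ne_zero h4 hx)
      rw [aux_shift hZ e _ _ hu, aux_sqsum hZ e he, if_neg hu, if_neg hc2, ← hGb, ← hη]
      have hh : η (-c₂ / (4 * x)) * η x = η (-c₂) := by
        have h5 : -c₂ / (4 * x) * x * 4 = -c₂ := by field_simp
        have h7 := congrArg η h5
        rwa [hηmul, hηmul, hη4, mul_one] at h7
      have h6 : -(x * c₁) - (-c₃) ^ 2 / (4 * (-c₂ / (4 * x))) = x * (c₃ ^ 2 / c₂ - c₁) := by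
        field_simp
        ring
      rw [h6, ← hh]
      ring
  rw [hstep1, Fintype.sum_eq_add_sum_compl (0 : ZMod p), hT0]
  have hcong : ∑ x ∈ ({0}ᶜ : Finset (ZMod p)), ∑ y : ZMod p, ∑ z : ZMod p,
      e (-(x * c₁) - y * c₂ - z * c₃) * expS ψ x y z = 
      ∑ x ∈ ({0}ᶜ : Finset (ZMod p)), 
        ((p : ℂ) ^ m + G * Gb * η (-c₂)) * G * (if c₂ = 0 then (if c₃ = 0 then (p : ℂ) else 0) *
        (η x * e (x * (-c₁))) else Gb * η (-c₂) * e (x * (c₃ ^ 2 / c₂ - c₁))) := by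
    refine Finset.sum_congr rfl fun x hx => ?_
    exact hT1 x (by simpa using hx)
  rw [hcong, ← Finset.mul_sum]
  by_cases hc2 : c₂ = 0
  · subst hc2
    simp only [if_true, neg_zero, hη0, mul_zero, add_zero]
    have := hgs (-c₁)
    rw [Fintype.sum_eq_add_sum_compl (0 : ZMod p), hη0, zero_mul, zero_add] at this
    rw [← Finset.mul_sum, this]
    split_ifs <;> ring
  · simp only [if_neg hc2]
    have := horth (c₃ ^ 2 / c₂ - c₁)
    have hiff : (c₃ ^ 2 / c₂ - c₁ = 0) ↔ (c₃ ^ 2 - c₁ * c₂ = 0) := by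
      rw [sub_eq_zero, sub_eq_zero, div_eq_iff hc2]
    rw [Fintype.sum_eq_add_sum_compl (0 : ZMod p), zero_mul, AddChar.map_zero_eq_one] at this
    simp only [hiff] at this
    rw [← Finset.mul_sum, ← this]
    ring

theorem N3_card_m_odd (p m : ℕ) [Fact (Nat.Prime p)] (hp : Odd p)
    (F : Type) [Field F] [Fintype F] [Algebra (ZMod p) F]
    (hm : 0 < m) (hq : Fintype.card F = p ^ m)
    (hmodd : Odd m) (c₁ c₂ c₃ : ZMod p) :
    (c₁ = 0 ∧ c₂ = 0 ∧ c₃ = 0 →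
      (((univ.filter (fun ab : F × F =>
      Trq p F (ab.1 ^ 2) = c₁ ∧ Trq p F (ab.2 ^ 2) = c₂ ∧
        Trq p F (ab.1 * ab.2) = c₃)).card : ℕ) : ℂ) = (p : ℂ) ^ (2 * (m : ℤ) - 3 : ℤ) + (p : ℂ) ^ ((m : ℤ) - 3 : ℤ) * ((p : ℂ) - 1) * (2 * (p : ℂ) - 1) - (p : ℂ) ^ (-4 : ℤ) * ((p : ℂ) - 1) ^ 2 * (GaussQ p F) ^ 2 * (GaussP p) ^ 2) ∧
    (c₁ = 0 ∧ c₂ = 0 ∧ c₃ ≠ 0 →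
      (((univ.filter (fun ab : F × F =>
      Trq p F (ab.1 ^ 2) = c₁ ∧ Trq p F (ab.2 ^ 2) = c₂ ∧
        Trq p F (ab.1 * ab.2) = c₃)).card : ℕ) : ℂ) = (p : ℂ) ^ (2 * (m : ℤ) - 3 : ℤ) - (p : ℂ) ^ ((m : ℤ) - 3 : ℤ) * (2 * (p : ℂ) - 1) + (p : ℂ) ^ (-4 : ℤ) * ((p : ℂ) - 1) * (GaussQ p F) ^ 2 * (GaussP p) ^ 2) ∧
    (c₂ ≠ 0 ∧ c₁ = 0 ∧ c₃ = 0 →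
      (((univ.filter (fun ab : F × F =>
      Trq p F (ab.1 ^ 2) = c₁ ∧ Trq p F (ab.2 ^ 2) = c₂ ∧
        Trq p F (ab.1 * ab.2) = c₃)).card : ℕ) : ℂ) = (p : ℂ) ^ (2 * (m : ℤ) - 3 : ℤ) + (p : ℂ) ^ ((m : ℤ) - 3 : ℤ) * ((p : ℂ) - 1) ^ 2 + (p : ℂ) ^ (-4 : ℤ) * ((p : ℂ) - 1) * (GaussQ p F) ^ 2 * (GaussP p) ^ 2 + (p : ℂ) ^ ((m : ℤ) - 2 : ℤ) * etaBar p (-c₂) * (GaussQ p F * GaussP p)) ∧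
    (c₁ ≠ 0 ∧ c₂ = 0 ∧ c₃ = 0 →
      (((univ.filter (fun ab : F × F =>
      Trq p F (ab.1 ^ 2) = c₁ ∧ Trq p F (ab.2 ^ 2) = c₂ ∧
        Trq p F (ab.1 * ab.2) = c₃)).card : ℕ) : ℂ) = (p : ℂ) ^ (2 * (m : ℤ) - 3 : ℤ) + (p : ℂ) ^ ((m : ℤ) - 3 : ℤ) * ((p : ℂ) - 1) ^ 2 + (p : ℂ) ^ (-4 : ℤ) * ((p : ℂ) - 1) * (GaussQ p F) ^ 2 * (GaussP p) ^ 2 + (p : ℂ) ^ ((m : ℤ) - 2 : ℤ) * etaBar p (-c₁) * (GaussQ p F * GaussP p)) ∧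
    ((c₁ ≠ 0 ∧ c₂ ≠ 0 ∧ c₃ = 0) ∨ (c₁ ≠ 0 ∧ c₂ = 0 ∧ c₃ ≠ 0) ∨ (c₁ = 0 ∧ c₂ ≠ 0 ∧ c₃ ≠ 0) →
      (((univ.filter (fun ab : F × F =>
      Trq p F (ab.1 ^ 2) = c₁ ∧ Trq p F (ab.2 ^ 2) = c₂ ∧
        Trq p F (ab.1 * ab.2) = c₃)).card : ℕ) : ℂ) = (p : ℂ) ^ (2 * (m : ℤ) - 3 : ℤ) - (p : ℂ) ^ ((m : ℤ) - 3 : ℤ) * ((p : ℂ) - 1) - (p : ℂ) ^ (-4 : ℤ) * (GaussQ p F) ^ 2 * (GaussP p) ^ 2) ∧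
    ((c₁ ≠ 0 ∧ c₂ ≠ 0 ∧ c₃ ≠ 0) ∧ c₃ ^ 2 - c₁ * c₂ = 0 →
      (((univ.filter (fun ab : F × F =>
      Trq p F (ab.1 ^ 2) = c₁ ∧ Trq p F (ab.2 ^ 2) = c₂ ∧
        Trq p F (ab.1 * ab.2) = c₃)).card : ℕ) : ℂ) = (p : ℂ) ^ (2 * (m : ℤ) - 3 : ℤ) + (p : ℂ) ^ ((m : ℤ) - 3 : ℤ) + (p : ℂ) ^ (-4 : ℤ) * ((p : ℂ) ^ 2 - (p : ℂ) - 1) * (GaussQ p F) ^ 2 * (GaussP p) ^ 2 + (p : ℂ) ^ ((m : ℤ) - 3 : ℤ) * (etaBar p (-c₁) * ((p : ℂ) - 1) + etaBar p (-c₂)) * (GaussQ p F * GaussP p)) ∧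
    ((c₁ ≠ 0 ∧ c₂ ≠ 0 ∧ c₃ ≠ 0) ∧ c₃ ^ 2 - c₁ * c₂ ≠ 0 →
      (((univ.filter (fun ab : F × F =>
      Trq p F (ab.1 ^ 2) = c₁ ∧ Trq p F (ab.2 ^ 2) = c₂ ∧
        Trq p F (ab.1 * ab.2) = c₃)).card : ℕ) : ℂ) = (p : ℂ) ^ (2 * (m : ℤ) - 3 : ℤ) + (p : ℂ) ^ ((m : ℤ) - 3 : ℤ) - (p : ℂ) ^ (-4 : ℤ) * ((p : ℂ) + 1) * (GaussQ p F) ^ 2 * (GaussP p) ^ 2) := by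
  have hpP : Nat.Prime p := Fact.out
  have hp2 : p ≠ 2 := by rintro rfl; exact absurd hp (by decide)
  haveI : CharP F p := charP_of_injective_algebraMap (algebraMap (ZMod p) F).injective p
  have hF : ringChar F ≠ 2 := by rw [ringChar.eq F p]; exact hp2
  have hZ : ringChar (ZMod p) ≠ 2 := by rw [ZMod.ringChar_zmod_n]; exact hp2
  have hζ : IsPrimitiveRoot (zeta p) p := Complex.isPrimitiveRoot_exp p hpP.ne_zero
  set e : AddChar (ZMod p) ℂ := AddChar.zmodChar p hζ.pow_eq_one with hedef
  have he : e.IsPrimitive := AddChar.zmodChar_primitive_of_primitive_root p hζ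
  have hechi : ∀ c, chiBar p c = e c := fun c => rfl
  set ψ : AddChar F ℂ := e.compAddMonoidHom (Algebra.trace (ZMod p) F).toAddMonoidHom with hψdef
  have hψchi : ∀ x, chiQ p F x = ψ x := fun x => rfl
  have hψ : ψ.IsPrimitive := by
    apply AddChar.IsPrimitive.of_ne_one
    rw [AddChar.ne_one_iff]
    obtain ⟨x, hx⟩ := Algebra.trace_surjective (ZMod p) F 1
    refine ⟨x, ?_⟩
    have : ψ x = e 1 := by rw [← hx]; rfl
    rw [this]
    exact (AddChar.zmod_char_ne_one_iff p e).mp (by simpa using he one_ne_zero)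
  have heta : ∀ t, etaBar p t = ((quadraticChar (ZMod p) t : ℤ) : ℂ) := by
    intro t
    rw [quadraticChar_apply]
    unfold etaBar quadraticCharFun
    split_ifs <;> simp
  have hetaQ : ∀ t, etaQ F t = ((quadraticChar F t : ℤ) : ℂ) := by
    intro t
    rw [quadraticChar_apply]
    unfold etaQ quadraticCharFun
    split_ifs <;> simp
  have hG : GaussQ p F = ∑ u : F, ((quadraticChar F u : ℤ) : ℂ) * ψ u := by
    unfold GaussQ
    simp only [hetaQ, hψchi]
    rw [Finset.sum_filter]
    refine Finset.sum_congr rfl fun u _ => ?_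
    by_cases hu : u = 0 <;> simp [hu]
  have hGb : GaussP p = ∑ u : ZMod p, ((quadraticChar (ZMod p) u : ℤ) : ℂ) * e u := by
    unfold GaussP
    simp only [heta, hechi]
    rw [Finset.sum_filter]
    refine Finset.sum_congr rfl fun u _ => ?_
    by_cases hu : u = 0 <;> simp [hu]
  have hsq : (GaussQ p F * GaussP p) ^ 2 = (p : ℂ) ^ m * p := by
    rw [mul_pow, hG, hGb, aux_gauss_sq hF ψ hψ, aux_gauss_sq hZ e he, hq, ZMod.card]
    have h1 := aux_restrict p m hp F hq hF hZ hmodd (-1)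
    rw [map_neg, map_one] at h1
    rw [h1]
    have h2 := quadraticChar_sq_one (F := ZMod p) (a := -1) (by simp)
    have h3 : ((quadraticChar (ZMod p) (-1) : ℤ) : ℂ) ^ 2 = 1 := by exact_mod_cast h2
    push_cast
    linear_combination ((p : ℂ) ^ m * p) * h3
  have hcore := core p m hp F hq hF hZ hmodd e he ψ hψ (Algebra.trace (ZMod p) F)
    (fun x => rfl) c₁ c₂ c₃ _ _ (etaBar p) heta hG hGb _ rfl
  have hηsq : ∀ s, s ≠ 0 → etaBar p s ^ 2 = 1 := by
    intro s hs
    rw [heta]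
    exact_mod_cast quadraticChar_sq_one hs
  have hηc : c₂ ≠ 0 → c₁ ≠ 0 → c₃ ^ 2 - c₁ * c₂ = 0 → etaBar p (-c₁) = etaBar p (-c₂) := by
    intro h2 h1 hD
    have h3 : (-c₁) * (-c₂) = c₃ ^ 2 := by linear_combination -hD
    have hc3 : c₃ ≠ 0 := by
      rintro rfl
      apply mul_ne_zero h1 h2
      linear_combination h3
    have h4 : etaBar p (-c₁) * etaBar p (-c₂) = 1 := by
      rw [heta, heta, ← Int.cast_mul, ← map_mul, h3, quadraticChar_sq_one' hc3, Int.cast_one]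
    have h5 := hηsq (-c₂) (neg_ne_zero.mpr h2)
    linear_combination etaBar p (-c₂) * h4 - etaBar p (-c₁) * h5
  have hp0 : (p : ℂ) ≠ 0 := by exact_mod_cast hpP.ne_zero
  unfold Trq
  set N := (univ.filter (fun ab : F × F =>
      Algebra.trace (ZMod p) F (ab.1 ^ 2) = c₁ ∧ Algebra.trace (ZMod p) F (ab.2 ^ 2) = c₂ ∧
        Algebra.trace (ZMod p) F (ab.1 * ab.2) = c₃)).card with hNdef
  have z1 : (p : ℂ) ^ (2 * (m : ℤ) - 3 : ℤ) = ((p : ℂ) ^ m) ^ 2 / (p : ℂ) ^ 3 := by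
    rw [zpow_sub₀ hp0, mul_comm, zpow_mul]; norm_cast
  have z2 : (p : ℂ) ^ ((m : ℤ) - 3 : ℤ) = (p : ℂ) ^ m / (p : ℂ) ^ 3 := by
    rw [zpow_sub₀ hp0]; norm_cast
  have z3 : (p : ℂ) ^ ((m : ℤ) - 2 : ℤ) = (p : ℂ) ^ m / (p : ℂ) ^ 2 := by
    rw [zpow_sub₀ hp0]; norm_cast
  have z4 : (p : ℂ) ^ (-4 : ℤ) = 1 / (p : ℂ) ^ 4 := by
    rw [zpow_neg, one_div]; norm_cast
  rw [z1, z2, z3, z4]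
  have fin : ∀ R : ℂ, (p : ℂ) ^ 3 * N * p = (p : ℂ) ^ 4 * R → (N : ℂ) = R := by
    intro R hR
    have : (p : ℂ) ^ 4 * (N : ℂ) = (p : ℂ) ^ 4 * R := by rw [← hR]; ring
    exact mul_left_cancel₀ (pow_ne_zero 4 hp0) this
  generalize (p : ℂ) ^ m = q at *
  generalize GaussQ p F = G at *
  generalize GaussP p = Gb at *
  have hE : c₂ ≠ 0 → (G * Gb * etaBar p (-c₂)) ^ 2 = q * p := by
    intro h2
    rw [mul_pow, hsq, hηsq _ (neg_ne_zero.mpr h2), mul_one]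
  have hη0 : etaBar p 0 = 0 := by simp [etaBar]
  refine ⟨?_, ?_, ?_, ?_, ?_, ?_, ?_⟩
  · rintro ⟨rfl, rfl, rfl⟩
    simp only [if_true, neg_zero, hη0] at hcore
    apply fin
    rw [hcore]
    field_simp
    linear_combination ((p : ℂ) - 1) ^ 2 * hsq
  · rintro ⟨rfl, rfl, h3⟩
    simp only [if_true, if_neg h3] at hcore
    apply fin
    rw [hcore]
    field_simp
    linear_combination -((p : ℂ) - 1) * hsq
  · rintro ⟨h2, rfl, rfl⟩
    have h2' := hE h2
    simp [if_neg h2] at hcore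
    apply fin
    rw [hcore]
    field_simp
    linear_combination ((p : ℂ) * (p - 1)) * h2' - ((p : ℂ) - 1) * hsq
  · rintro ⟨h1, rfl, rfl⟩
    simp only [if_true] at hcore
    apply fin
    rw [hcore]
    field_simp
    linear_combination -((p : ℂ) - 1) * hsq
  · intro h
    have hD : c₃ ^ 2 - c₁ * c₂ ≠ 0 := by
      rcases h with ⟨h1, h2, rfl⟩ | ⟨h1, rfl, h3⟩ | ⟨rfl, h2, h3⟩
      · simp [h1, h2]
      · simp [h3]
      · simp [h3]
    apply fin
    by_cases h2 : c₂ = 0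
    · have h3 : c₃ ≠ 0 := by
        rintro rfl
        simp [h2] at hD
      rw [if_pos h2, if_neg h3, if_neg h3] at hcore
      rw [hcore]
      field_simp
      linear_combination hsq
    · have h2' := hE h2
      rw [if_neg h2, if_neg hD] at hcore
      rw [hcore]
      field_simp
      linear_combination -(p : ℂ) * h2' + hsq
  · rintro ⟨⟨h1, h2, h3⟩, hD⟩
    have h2' := hE h2
    rw [hηc h2 h1 hD]
    rw [if_neg h2, if_pos hD] at hcore
    apply fin
    rw [hcore]
    field_simp
    linear_combination ((p : ℂ) * (p - 1)) * h2' - ((p : ℂ) ^ 2 - p - 1) * hsq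
  · rintro ⟨⟨h1, h2, h3⟩, hD⟩
    have h2' := hE h2
    rw [if_neg h2, if_neg hD] at hcore
    apply fin
    rw [hcore]
    field_simp
    linear_combination -(p : ℂ) * h2' + ((p : ℂ) + 1) * hsq
end
end

section
/- Let a, b ∈ 𝔽_q^* with a ≠ wb for every w ∈ 𝔽_p^*, write α = Tr(a²), β = Tr(b²), γ = Tr(ab), and set Ω₄ = Σ_{d ∈ 𝔽_q} Σ_{x ∈ 𝔽_p^*} ζ_p^{x·Tr(d²)} Σ_{y ∈ 𝔽_p^*} ζ_p^{y·Tr(ad)} Σ_{z ∈ 𝔽_p^*} ζ_p^{z·Tr(bd)}. If m is even, then: Ω₄ = G(p−1)³ if α = β = γ = 0; Ω₄ = G(p−1) if α ≠ 0, β ≠ 0 and αβ = γ²; Ω₄ = η̄(γ² − αβ)·p(p−1)G + G(p−1) if α ≠ 0, β ≠ 0 and αβ ≠ γ²; Ω₄ = −G(p−1)² if exactly one of α, β, γ is nonzero; and Ω₄ = G(p−1) if exactly one of α, β is zero and γ ≠ 0. -/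
open Finset
open scoped Classical

noncomputable section

lemma chiBar_eq_std (p : ℕ) [Fact (Nat.Prime p)] (c : ZMod p) :
    chiBar p c = ZMod.stdAddChar c := by
  have h := ZMod.stdAddChar_coe (N := p) (c.val : ℤ)
  rw [Int.cast_natCast, ZMod.natCast_zmod_val] at h
  rw [h, chiBar, zeta, ← Complex.exp_nat_mul]
  congr 1
  push_cast
  ring

lemma chiBar_add (p : ℕ) [Fact (Nat.Prime p)] (c d : ZMod p) :
    chiBar p (c + d) = chiBar p c * chiBar p d := by
  simp only [chiBar_eq_std, AddChar.map_add_eq_mul]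

/-- Sum over nonzero `x` of `ζ^{xc}`. -/
lemma sum_chiBar_nonzero (p : ℕ) [Fact (Nat.Prime p)] (c : ZMod p) :
    ∑ x ∈ univ.filter (fun x : ZMod p => x ≠ 0), chiBar p (x * c)
      = (if c = 0 then (p : ℂ) else 0) - 1 := by
  have h := AddChar.sum_mulShift c (ZMod.isPrimitive_stdAddChar p)
  rw [← Finset.sum_filter_add_sum_filter_not univ (fun x : ZMod p => x ≠ 0)] at h
  have h0 : univ.filter (fun x : ZMod p => ¬ x ≠ 0) = {0} := by ext; simp
  rw [h0] at h
  simp only [Finset.sum_singleton, zero_mul, AddChar.map_zero_eq_one, ZMod.card] at h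
  simp only [chiBar_eq_std]
  push_cast at h
  rw [← h]; ring

lemma ringChar_ne_two (p m : ℕ) [Fact (Nat.Prime p)] (hp : Odd p)
    (F : Type) [Field F] [Algebra (ZMod p) F] : ringChar F ≠ 2 := by
  have : CharP F p := charP_of_injective_algebraMap (algebraMap (ZMod p) F).injective p
  rw [ringChar.eq F p]
  rintro rfl
  exact absurd hp (by decide)

lemma etaQ_eq (F : Type) [Field F] [Fintype F] (x : F) :
    etaQ F x = ((quadraticChar F x : ℤ) : ℂ) := by
  unfold etaQ
  rw [quadraticChar_apply, quadraticCharFun]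
  split_ifs <;> simp

lemma card_sqrts (F : Type) [Field F] [Fintype F] (hF : ringChar F ≠ 2) (y : F) :
    ((#(univ.filter (fun x : F => x ^ 2 = y)) : ℕ) : ℂ) = etaQ F y + 1 := by
  have h := quadraticChar_card_sqrts hF y
  rw [etaQ_eq]
  have h2 : univ.filter (fun x : F => x ^ 2 = y) = {x : F | x ^ 2 = y}.toFinset := by
    ext; simp
  rw [h2]
  exact_mod_cast h

lemma sum_chiQ (p : ℕ) [Fact (Nat.Prime p)]
    (F : Type) [Field F] [Fintype F] [Algebra (ZMod p) F] :
    ∑ x : F, chiQ p F x = 0 := by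
  let ψ : AddChar F ℂ :=
    (ZMod.stdAddChar (N := p)).compAddMonoidHom (Algebra.trace (ZMod p) F).toAddMonoidHom
  have hψ : ∀ x, chiQ p F x = ψ x := fun x => by
    rw [chiQ, chiBar_eq_std]; rfl
  simp only [hψ]
  apply AddChar.sum_eq_zero_of_ne_one
  rw [AddChar.ne_one_iff]
  obtain ⟨x, hx⟩ := Algebra.trace_surjective (ZMod p) F 1
  refine ⟨x, ?_⟩
  have : ψ x = ZMod.stdAddChar (1 : ZMod p) := by rw [← hx]; rfl
  rw [this, ← (ZMod.stdAddChar (N := p)).map_zero_eq_one]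
  intro h
  exact one_ne_zero (ZMod.injective_stdAddChar h)

lemma sum_chiQ_sq (p m : ℕ) [Fact (Nat.Prime p)] (hp : Odd p)
    (F : Type) [Field F] [Fintype F] [Algebra (ZMod p) F] :
    ∑ d : F, chiQ p F (d ^ 2) = GaussQ p F := by
  have hF := ringChar_ne_two p m hp F
  have h1 : ∑ d : F, chiQ p F (d ^ 2)
      = ∑ y : F, ∑ d ∈ univ.filter (fun d : F => d ^ 2 = y), chiQ p F (d ^ 2) :=
    (Finset.sum_fiberwise univ (fun d : F => d ^ 2) (fun d => chiQ p F (d ^ 2))).symm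
  have h2 : ∀ y : F, ∑ d ∈ univ.filter (fun d : F => d ^ 2 = y), chiQ p F (d ^ 2)
      = etaQ F y * chiQ p F y + chiQ p F y := by
    intro y
    rw [Finset.sum_congr rfl (g := fun _ => chiQ p F y)
      (fun d hd => by rw [(Finset.mem_filter.1 hd).2]), Finset.sum_const, nsmul_eq_mul,
      card_sqrts F hF]
    ring
  rw [h1]
  simp only [h2]
  rw [Finset.sum_add_distrib, sum_chiQ, add_zero, GaussQ]
  symm
  apply Finset.sum_subset (Finset.filter_subset _ _)
  intro x _ hx
  have : x = 0 := by simpa using hx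
  simp [this, etaQ]

lemma isSquare_algebraMap (p m : ℕ) [Fact (Nat.Prime p)] (hp : Odd p)
    (F : Type) [Field F] [Fintype F] [Algebra (ZMod p) F]
    (hq : Fintype.card F = p ^ m) (hmeven : Even m) (x : ZMod p) (hx : x ≠ 0) :
    IsSquare (algebraMap (ZMod p) F x) := by
  have hF := ringChar_ne_two p m hp F
  have hx' : algebraMap (ZMod p) F x ≠ 0 := by simpa using hx
  rw [FiniteField.isSquare_iff hF hx', hq]
  obtain ⟨n, rfl⟩ := hmeven
  obtain ⟨k, rfl⟩ := hp
  have hd : ((2*k+1)^2 - 1) ∣ (2*k+1)^(n+n) - 1 := by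
    have := Nat.sub_dvd_pow_sub_pow ((2*k+1)^2) 1 n
    rw [one_pow, ← pow_mul] at this
    rwa [← two_mul n]
  obtain ⟨c, hc⟩ := hd
  have e1 : (2*k+1)^2 - 1 = 2 * (2 * k * (k+1)) := by
    rw [Nat.sub_eq_iff_eq_add (Nat.one_le_pow _ _ (by omega))]; ring
  have hpos : 1 ≤ (2*k+1)^(n+n) := Nat.one_le_pow _ _ (by omega)
  have e2 : (2*k+1)^(n+n) = 2 * (2 * k * (k+1) * c) + 1 := by
    rw [e1] at hc
    have : 2 * (2 * k * (k+1)) * c = 2 * (2 * k * (k+1) * c) := by ring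
    omega
  have e3 : (2*k+1)^(n+n) / 2 = 2 * k * ((k+1) * c) := by
    rw [e2]
    have : 2 * k * ((k+1) * c) = 2 * k * (k+1) * c := by ring
    omega
  rw [e3, pow_mul, ← map_pow]
  have : x ^ (2 * k) = 1 := by
    have := ZMod.pow_card_sub_one_eq_one hx
    simpa using this
  rw [this]; simp

/-- The quadratic Weil sum. -/
lemma weil_sum (p m : ℕ) [Fact (Nat.Prime p)] (hp : Odd p)
    (F : Type) [Field F] [Fintype F] [Algebra (ZMod p) F]
    (hq : Fintype.card F = p ^ m) (hmeven : Even m) (x : ZMod p) (hx : x ≠ 0) (u : F) :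
    ∑ d : F, chiBar p (x * Trq p F (d ^ 2) + Trq p F (u * d))
      = GaussQ p F * chiBar p (-(x⁻¹ * (4 : ZMod p)⁻¹) * Trq p F (u ^ 2)) := by
  obtain ⟨s, hs⟩ := isSquare_algebraMap p m hp F hq hmeven x hx
  have hX : algebraMap (ZMod p) F x ≠ 0 := by simpa using hx
  have hs0 : s ≠ 0 := by rintro rfl; simp at hs; exact hx hs
  have h2 : (2 : F) ≠ 0 := Ring.two_ne_zero (ringChar_ne_two p m hp F)
  have h4' : algebraMap (ZMod p) F 4 = 2 ^ 2 := by rw [map_ofNat]; norm_num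
  have hsm : ∀ (c : ZMod p) (v : F), c * Trq p F v = Trq p F (algebraMap (ZMod p) F c * v) := by
    intro c v
    rw [Trq, Trq, ← Algebra.smul_def, map_smul, smul_eq_mul]
  have hadd : ∀ v w : F, Trq p F v + Trq p F w = Trq p F (v + w) := fun v w => by
    simp [Trq]
  rw [← sum_chiQ_sq p m hp F, Finset.sum_mul]
  -- d ↦ s * d + u / (2 s)
  refine Fintype.sum_bijective (fun d => s * d + u / (2 * s))
    ((AddGroup.addRight_bijective _).comp (Equiv.mulLeft₀ s hs0).bijective) _ _ ?_
  intro d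
  rw [chiQ, ← chiBar_add, hsm, hsm, hadd, hadd]
  congr 2
  rw [map_neg, map_mul, map_inv₀, map_inv₀, h4', hs]
  field_simp
  ring

/-- Counting roots. -/
def rootCount (p : ℕ) [Fact (Nat.Prime p)] (α β γ : ZMod p) : ℕ :=
  #(univ.filter (fun t : ZMod p => t ≠ 0 ∧ α * t ^ 2 + 2 * γ * t + β = 0))

lemma card_nonzero (p : ℕ) [Fact (Nat.Prime p)] :
    ((#(univ.filter (fun x : ZMod p => x ≠ 0)) : ℕ) : ℂ) = (p : ℂ) - 1 := by
  have h := sum_chiBar_nonzero p 0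
  simpa [chiBar] using h

lemma sum_form (p : ℕ) [Fact (Nat.Prime p)] (α β γ : ZMod p) :
    ∑ y ∈ univ.filter (fun y : ZMod p => y ≠ 0), ∑ z ∈ univ.filter (fun z : ZMod p => z ≠ 0),
      ((if α * y ^ 2 + 2 * γ * y * z + β * z ^ 2 = 0 then (p : ℂ) else 0) - 1)
      = ((p : ℂ) - 1) * (p * rootCount p α β γ - (p - 1)) := by
  rw [Finset.sum_comm]
  have key : ∀ z ∈ univ.filter (fun z : ZMod p => z ≠ 0),
      ∑ y ∈ univ.filter (fun y : ZMod p => y ≠ 0),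
      ((if α * y ^ 2 + 2 * γ * y * z + β * z ^ 2 = 0 then (p : ℂ) else 0) - 1)
      = (p * rootCount p α β γ - (p - 1)) := by
    intro z hz
    have hz : z ≠ 0 := by simpa using hz
    have : ∑ y ∈ univ.filter (fun y : ZMod p => y ≠ 0),
      ((if α * y ^ 2 + 2 * γ * y * z + β * z ^ 2 = 0 then (p : ℂ) else 0) - 1)
      = ∑ t ∈ univ.filter (fun t : ZMod p => t ≠ 0),
      ((if α * t ^ 2 + 2 * γ * t + β = 0 then (p : ℂ) else 0) - 1) := by
      refine Finset.sum_nbij' (fun y => y * z⁻¹) (fun t => t * z) ?_ ?_ ?_ ?_ ?_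
      · intro y hy; simpa [hz] using hy
      · intro y hy; simpa [hz] using hy
      · intro y _; field_simp
      · intro y _; field_simp
      · intro y _
        congr 1
        have : α * y ^ 2 + 2 * γ * y * z + β * z ^ 2
          = z ^ 2 * (α * (y * z⁻¹) ^ 2 + 2 * γ * (y * z⁻¹) + β) := by field_simp
        rw [this]
        simp only [mul_eq_zero, pow_eq_zero_iff, ne_eq, OfNat.ofNat_ne_zero, not_false_eq_true,
          hz, false_or]
    rw [this, Finset.sum_sub_distrib, Finset.sum_const, nsmul_eq_mul, mul_one, card_nonzero,
      ← Finset.sum_filter, Finset.sum_const, Finset.filter_filter, nsmul_eq_mul, rootCount]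
    ring
  rw [Finset.sum_congr rfl key, Finset.sum_const, nsmul_eq_mul, card_nonzero]

lemma Omega4_eq (p m : ℕ) [Fact (Nat.Prime p)] (hp : Odd p)
    (F : Type) [Field F] [Fintype F] [Algebra (ZMod p) F]
    (hq : Fintype.card F = p ^ m) (hmeven : Even m) (a b : F) :
    (∑ d : F,
      (∑ x ∈ univ.filter (fun x : ZMod p => x ≠ 0), chiBar p (x * Trq p F (d ^ 2))) *
      (∑ y ∈ univ.filter (fun y : ZMod p => y ≠ 0), chiBar p (y * Trq p F (a * d))) *
      (∑ z ∈ univ.filter (fun z : ZMod p => z ≠ 0), chiBar p (z * Trq p F (b * d))))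
    = GaussQ p F * (((p : ℂ) - 1) *
        (p * rootCount p (Trq p F (a ^ 2)) (Trq p F (b ^ 2)) (Trq p F (a * b)) - (p - 1))) := by
  rw [← sum_form]
  have hsm : ∀ (c : ZMod p) (v : F), Trq p F (algebraMap (ZMod p) F c * v) = c * Trq p F v := by
    intro c v
    rw [Trq, Trq, ← Algebra.smul_def, map_smul, smul_eq_mul]
  have hadd : ∀ v w : F, Trq p F (v + w) = Trq p F v + Trq p F w := fun v w => by
    simp [Trq]
  have h4 : (4 : ZMod p) ≠ 0 := by
    have h2 : (2 : ZMod p) ≠ 0 := Ring.two_ne_zero (ringChar_ne_two p m hp (ZMod p))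
    have : (4 : ZMod p) = 2 ^ 2 := by norm_num
    rw [this]; exact pow_ne_zero _ h2
  have step : ∀ y z : ZMod p,
      ∑ x ∈ univ.filter (fun x : ZMod p => x ≠ 0), ∑ d : F,
        chiBar p (x * Trq p F (d ^ 2)) * chiBar p (y * Trq p F (a * d)) *
          chiBar p (z * Trq p F (b * d))
      = GaussQ p F * ((if Trq p F (a ^ 2) * y ^ 2 + 2 * Trq p F (a * b) * y * z
          + Trq p F (b ^ 2) * z ^ 2 = 0 then (p : ℂ) else 0) - 1) := by
    intro y z
    rw [← sum_chiBar_nonzero, Finset.mul_sum]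
    refine Finset.sum_nbij' (fun x => -(x⁻¹ * (4 : ZMod p)⁻¹)) (fun x => -(x⁻¹ * (4 : ZMod p)⁻¹))
      ?_ ?_ ?_ ?_ ?_
    · intro x hx; simpa [h4] using hx
    · intro x hx; simpa [h4] using hx
    · intro x hx
      have hx : x ≠ 0 := by simpa using hx
      field_simp
    · intro x hx
      have hx : x ≠ 0 := by simpa using hx
      field_simp
    · intro x hx
      have hx : x ≠ 0 := by simpa using hx
      have hw := weil_sum p m hp F hq hmeven x hx
        (algebraMap (ZMod p) F y * a + algebraMap (ZMod p) F z * b)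
      have e : Trq p F ((algebraMap (ZMod p) F y * a + algebraMap (ZMod p) F z * b) ^ 2)
        = Trq p F (a ^ 2) * y ^ 2 + 2 * Trq p F (a * b) * y * z + Trq p F (b ^ 2) * z ^ 2 := by
        have : (algebraMap (ZMod p) F y * a + algebraMap (ZMod p) F z * b) ^ 2
          = algebraMap (ZMod p) F (y ^ 2) * a ^ 2 + algebraMap (ZMod p) F (2 * y * z) * (a * b)
            + algebraMap (ZMod p) F (z ^ 2) * b ^ 2 := by
          simp only [map_mul, map_pow, map_ofNat]; ring
        rw [this, hadd, hadd, hsm, hsm, hsm]; ring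
      rw [← e, ← hw]
      refine Finset.sum_congr rfl fun d _ => ?_
      rw [← chiBar_add, ← chiBar_add, add_mul, hadd, mul_assoc, mul_assoc, hsm, hsm, add_assoc]
  have exch : ∀ d : F,
      (∑ x ∈ univ.filter (fun x : ZMod p => x ≠ 0), chiBar p (x * Trq p F (d ^ 2))) *
      (∑ y ∈ univ.filter (fun y : ZMod p => y ≠ 0), chiBar p (y * Trq p F (a * d))) *
      (∑ z ∈ univ.filter (fun z : ZMod p => z ≠ 0), chiBar p (z * Trq p F (b * d)))
      = ∑ y ∈ univ.filter (fun y : ZMod p => y ≠ 0), ∑ z ∈ univ.filter (fun z : ZMod p => z ≠ 0),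
        ∑ x ∈ univ.filter (fun x : ZMod p => x ≠ 0),
          chiBar p (x * Trq p F (d ^ 2)) * chiBar p (y * Trq p F (a * d)) *
          chiBar p (z * Trq p F (b * d)) := by
    intro d
    simp only [← Finset.sum_mul, ← Finset.mul_sum]
  rw [Finset.sum_congr rfl (fun d _ => exch d), Finset.sum_comm, Finset.mul_sum]
  refine Finset.sum_congr rfl fun y _ => ?_
  rw [Finset.sum_comm, Finset.mul_sum]
  refine Finset.sum_congr rfl fun z _ => ?_
  rw [Finset.sum_comm, step]

lemma rootCount_main (p : ℕ) [Fact (Nat.Prime p)] (hp : Odd p) (α β γ : ZMod p)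
    (hα : α ≠ 0) (hβ : β ≠ 0) :
    (rootCount p α β γ : ℂ) = etaBar p (γ ^ 2 - α * β) + 1 := by
  have h := card_sqrts (ZMod p) (ringChar_ne_two p 1 hp (ZMod p)) (γ ^ 2 - α * β)
  have e : etaBar p (γ ^ 2 - α * β) = etaQ (ZMod p) (γ ^ 2 - α * β) := by
    simp only [etaBar, etaQ]
    split_ifs <;> rfl
  rw [e, ← h, rootCount]
  congr 1
  refine Finset.card_nbij' (fun t => α * t + γ) (fun s => (s - γ) * α⁻¹) ?_ ?_ ?_ ?_
  · intro t ht
    simp only [Finset.coe_filter, Finset.mem_univ, true_and, Set.mem_ofPred_eq] at ht ⊢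
    linear_combination α * ht.2
  · intro s hs
    simp only [Finset.coe_filter, Finset.mem_univ, true_and, Set.mem_ofPred_eq] at hs ⊢
    have h2 : α * ((s - γ) * α⁻¹) ^ 2 + 2 * γ * ((s - γ) * α⁻¹) + β = 0 := by
      field_simp
      linear_combination hs
    refine ⟨fun h0 => ?_, h2⟩
    rw [h0] at h2
    apply hβ
    simpa using h2
  · intro t _; field_simp; ring
  · intro t _; field_simp; ring

lemma rootCount_linear (p : ℕ) [Fact (Nat.Prime p)] (hp : Odd p) (β γ : ZMod p)
    (hβ : β ≠ 0) (hγ : γ ≠ 0) : rootCount p 0 β γ = 1 := by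
  have h2 : (2 : ZMod p) ≠ 0 := Ring.two_ne_zero (ringChar_ne_two p 1 hp (ZMod p))
  rw [rootCount, Finset.card_eq_one]
  refine ⟨-β / (2 * γ), ?_⟩
  ext t
  simp only [Finset.mem_filter, Finset.mem_univ, true_and, Finset.mem_singleton]
  constructor
  · rintro ⟨_, h⟩
    field_simp
    linear_combination h
  · rintro rfl
    refine ⟨by simp [hβ, hγ, h2], ?_⟩
    field_simp; ring

lemma rootCount_linear' (p : ℕ) [Fact (Nat.Prime p)] (hp : Odd p) (α γ : ZMod p)
    (hα : α ≠ 0) (hγ : γ ≠ 0) : rootCount p α 0 γ = 1 := by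
  have h2 : (2 : ZMod p) ≠ 0 := Ring.two_ne_zero (ringChar_ne_two p 1 hp (ZMod p))
  rw [rootCount, Finset.card_eq_one]
  refine ⟨-(2 * γ) / α, ?_⟩
  ext t
  simp only [Finset.mem_filter, Finset.mem_univ, true_and, Finset.mem_singleton]
  constructor
  · rintro ⟨ht, h⟩
    field_simp
    apply mul_left_cancel₀ ht
    linear_combination h
  · rintro rfl
    refine ⟨by simp [hα, hγ, h2], ?_⟩
    field_simp; ring


theorem Omega4_eval_m_even (p m : ℕ) [Fact (Nat.Prime p)] (hp : Odd p)
    (F : Type) [Field F] [Fintype F] [Algebra (ZMod p) F]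
    (hm : 0 < m) (hq : Fintype.card F = p ^ m)
    (hmeven : Even m) (a b : F) (ha : a ≠ 0) (hb : b ≠ 0)
    (hab : ∀ w : ZMod p, w ≠ 0 → a ≠ algebraMap (ZMod p) F w * b)
    (α β γ : ZMod p) (hα : α = Trq p F (a ^ 2)) (hβ : β = Trq p F (b ^ 2))
    (hγ : γ = Trq p F (a * b)) :
    (α = 0 ∧ β = 0 ∧ γ = 0 →
      (∑ d : F,
      (∑ x ∈ univ.filter (fun x : ZMod p => x ≠ 0), chiBar p (x * Trq p F (d ^ 2))) *
      (∑ y ∈ univ.filter (fun y : ZMod p => y ≠ 0), chiBar p (y * Trq p F (a * d))) *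
      (∑ z ∈ univ.filter (fun z : ZMod p => z ≠ 0), chiBar p (z * Trq p F (b * d)))) = GaussQ p F * ((p : ℂ) - 1) ^ 3) ∧
    (α ≠ 0 ∧ β ≠ 0 ∧ α * β = γ ^ 2 →
      (∑ d : F,
      (∑ x ∈ univ.filter (fun x : ZMod p => x ≠ 0), chiBar p (x * Trq p F (d ^ 2))) *
      (∑ y ∈ univ.filter (fun y : ZMod p => y ≠ 0), chiBar p (y * Trq p F (a * d))) *
      (∑ z ∈ univ.filter (fun z : ZMod p => z ≠ 0), chiBar p (z * Trq p F (b * d)))) = GaussQ p F * ((p : ℂ) - 1)) ∧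
    (α ≠ 0 ∧ β ≠ 0 ∧ α * β ≠ γ ^ 2 →
      (∑ d : F,
      (∑ x ∈ univ.filter (fun x : ZMod p => x ≠ 0), chiBar p (x * Trq p F (d ^ 2))) *
      (∑ y ∈ univ.filter (fun y : ZMod p => y ≠ 0), chiBar p (y * Trq p F (a * d))) *
      (∑ z ∈ univ.filter (fun z : ZMod p => z ≠ 0), chiBar p (z * Trq p F (b * d)))) = etaBar p (γ ^ 2 - α * β) * (p : ℂ) * ((p : ℂ) - 1) * GaussQ p F + GaussQ p F * ((p : ℂ) - 1)) ∧
    ((α ≠ 0 ∧ β = 0 ∧ γ = 0) ∨ (α = 0 ∧ β ≠ 0 ∧ γ = 0) ∨ (α = 0 ∧ β = 0 ∧ γ ≠ 0) →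
      (∑ d : F,
      (∑ x ∈ univ.filter (fun x : ZMod p => x ≠ 0), chiBar p (x * Trq p F (d ^ 2))) *
      (∑ y ∈ univ.filter (fun y : ZMod p => y ≠ 0), chiBar p (y * Trq p F (a * d))) *
      (∑ z ∈ univ.filter (fun z : ZMod p => z ≠ 0), chiBar p (z * Trq p F (b * d)))) = -(GaussQ p F * ((p : ℂ) - 1) ^ 2)) ∧
    (((α = 0 ∧ β ≠ 0) ∨ (α ≠ 0 ∧ β = 0)) ∧ γ ≠ 0 →
      (∑ d : F,
      (∑ x ∈ univ.filter (fun x : ZMod p => x ≠ 0), chiBar p (x * Trq p F (d ^ 2))) *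
      (∑ y ∈ univ.filter (fun y : ZMod p => y ≠ 0), chiBar p (y * Trq p F (a * d))) *
      (∑ z ∈ univ.filter (fun z : ZMod p => z ≠ 0), chiBar p (z * Trq p F (b * d)))) = GaussQ p F * ((p : ℂ) - 1)) := by
  rw [Omega4_eq p m hp F hq hmeven a b, ← hα, ← hβ, ← hγ]
  have h2 : (2 : ZMod p) ≠ 0 := Ring.two_ne_zero (ringChar_ne_two p 1 hp (ZMod p))
  refine ⟨?_, ?_, ?_, ?_, ?_⟩
  · rintro ⟨h1, h2, h3⟩
    have : (rootCount p α β γ : ℂ) = p - 1 := by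
      rw [← card_nonzero, rootCount, h1, h2, h3]; simp
    rw [this]; ring
  · rintro ⟨h1, h2, h3⟩
    rw [rootCount_main p hp α β γ h1 h2, h3]
    simp [etaBar]
  · rintro ⟨h1, h2, h3⟩
    rw [rootCount_main p hp α β γ h1 h2]
    ring
  · intro h
    have : rootCount p α β γ = 0 := by
      clear hα hβ hγ
      rw [rootCount, Finset.card_eq_zero, Finset.filter_eq_empty_iff]
      rintro t - ⟨ht, h0⟩
      rcases h with ⟨h1, rfl, rfl⟩ | ⟨rfl, h1, rfl⟩ | ⟨rfl, rfl, h1⟩ <;> simp_all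
    rw [this]; push_cast; ring
  · rintro ⟨⟨h1, h3⟩ | ⟨h1, h3⟩, h4⟩
    · rw [h1, rootCount_linear p hp β γ h3 h4]; push_cast; ring
    · rw [h3, rootCount_linear' p hp α γ h1 h4]; push_cast; ring
end
end

section
/- Let a, b ∈ 𝔽_q^* with a ≠ wb for every w ∈ 𝔽_p^*, write α = Tr(a²), β = Tr(b²), γ = Tr(ab), and set Ω₄ = Σ_{d ∈ 𝔽_q} Σ_{x ∈ 𝔽_p^*} ζ_p^{x·Tr(d²)} Σ_{y ∈ 𝔽_p^*} ζ_p^{y·Tr(ad)} Σ_{z ∈ 𝔽_p^*} ζ_p^{z·Tr(bd)}. If m is odd, then: Ω₄ = 0 if α = β = 0; Ω₄ = η̄(−β)(p−1)²GḠ if β ≠ 0 and α = γ = 0; Ω₄ = −η̄(−β)(p−1)GḠ if α = 0, β ≠ 0 and γ ≠ 0; Ω₄ = η̄(−α)(p−1)²GḠ if α ≠ 0 and β = γ = 0; Ω₄ = −η̄(−α)(p−1)GḠ if α ≠ 0, β = 0 and γ ≠ 0; Ω₄ = (η̄(−β)(p−1) − η̄(−α))(p−1)GḠ if α ≠ 0,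 β ≠ 0 and αβ = γ²; and Ω₄ = −(η̄(−β) + η̄(−α))(p−1)GḠ if α ≠ 0, β ≠ 0 and αβ ≠ γ². -/
open Finset
open scoped Classical

noncomputable section

section aux

variable {K : Type} [Field K] [Fintype K]

lemma mulLeft₀_coe' (c x : K) (hc : c ≠ 0) : Equiv.mulLeft₀ c hc x = c * x := rfl

/-- Inversion as a permutation. -/
def inv_equiv (K : Type) [Field K] : Equiv.Perm K :=
  Function.Involutive.toPerm (fun x : K => x⁻¹) inv_inv

lemma inv_equiv_apply (x : K) : inv_equiv K x = x⁻¹ := rfl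

lemma etaQ_eq_s12 (x : K) : etaQ K x = ((quadraticChar K x : ℤ) : ℂ) := by
  simp only [etaQ, quadraticChar_apply, quadraticCharFun]
  split_ifs <;> simp

lemma etaBar_eq (p : ℕ) [Fact p.Prime] (x : ZMod p) : etaBar p x = etaQ (ZMod p) x := by
  unfold etaQ etaBar
  split_ifs <;> rfl

lemma etaQ_zero : etaQ K 0 = 0 := by simp [etaQ]

lemma etaQ_mul (x y : K) : etaQ K (x * y) = etaQ K x * etaQ K y := by
  rw [etaQ_eq_s12, etaQ_eq_s12, etaQ_eq_s12, map_mul]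
  push_cast
  rfl

lemma etaQ_sq (x : K) (hx : x ≠ 0) : etaQ K (x ^ 2) = 1 := by
  have h : IsSquare (x ^ 2) := ⟨x, sq x⟩
  simp [etaQ, hx, h]

lemma etaQ_one : etaQ K 1 = 1 := by simp [etaQ]

lemma etaQ_inv (x : K) : etaQ K x⁻¹ = etaQ K x := by
  by_cases hx : x = 0
  · simp [hx]
  · have : x⁻¹ = x * (x⁻¹) ^ 2 := by field_simp
    rw [this, etaQ_mul, etaQ_sq _ (inv_ne_zero hx), mul_one]

lemma etaQ_mul_self (x : K) (hx : x ≠ 0) : etaQ K x * etaQ K x = 1 := by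
  rw [← etaQ_mul, ← sq, etaQ_sq x hx]

lemma etaQ_sum (h2 : ringChar K ≠ 2) : ∑ x : K, etaQ K x = 0 := by
  simp only [etaQ_eq_s12]
  exact_mod_cast quadraticChar_sum_zero h2

/-- Sum of a function of squares. -/
lemma sum_sq (h2 : ringChar K ≠ 2) (f : K → ℂ) :
    ∑ d : K, f (d ^ 2) = ∑ t : K, f t + ∑ t : K, etaQ K t * f t := by
  rw [← Finset.sum_fiberwise (s := univ) (g := fun d : K => d ^ 2), ← Finset.sum_add_distrib]
  refine Finset.sum_congr rfl fun t _ => ?_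
  rw [Finset.sum_congr rfl (g := fun _ => f t)]
  · rw [Finset.sum_const, nsmul_eq_mul]
    have := quadraticChar_card_sqrts h2 t
    rw [etaQ_eq_s12]
    have h3 : (((univ.filter fun d : K => d ^ 2 = t).card : ℤ) : ℂ)
        = ((quadraticChar K t + 1 : ℤ) : ℂ) := by
      rw [← this]
      congr 3
      ext d
      simp
    push_cast at h3
    rw [h3]; ring
  · intro d hd
    simp at hd
    rw [hd]

lemma gauss_shift (h2 : ringChar K ≠ 2) (ψ : AddChar K ℂ) (c : K) :
    ∑ x : K, etaQ K x * ψ (c * x) = etaQ K c * ∑ x : K, etaQ K x * ψ x := by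
  by_cases hc : c = 0
  · simp [hc, etaQ_zero, etaQ_sum h2]
  · rw [← Equiv.sum_comp (Equiv.mulLeft₀ c hc) (fun x => etaQ K x * ψ x), Finset.mul_sum]
    refine Finset.sum_congr rfl fun x _ => ?_
    simp only [mulLeft₀_coe', etaQ_mul]
    linear_combination (-etaQ K x * ψ (c * x)) * etaQ_mul_self c hc

lemma quad_gauss (h2 : ringChar K ≠ 2) (ψ : AddChar K ℂ) (hψ : ψ ≠ 1) (x c : K) (hx : x ≠ 0) :
    ∑ d : K, ψ (x * d ^ 2 + c * d)
      = etaQ K x * ψ (- c ^ 2 / (4 * x)) * ∑ t : K, etaQ K t * ψ t := by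
  have two : (2 : K) ≠ 0 := Ring.two_ne_zero h2
  have four : (4 : K) ≠ 0 := by
    have : (4 : K) = 2 * 2 := by norm_num
    rw [this]; exact mul_ne_zero two two
  rw [← Equiv.sum_comp (Equiv.addRight (-c / (2 * x)))]
  have : ∀ d : K, ψ (x * (Equiv.addRight (-c / (2 * x)) d) ^ 2
      + c * (Equiv.addRight (-c / (2 * x)) d)) = ψ (- c ^ 2 / (4 * x)) * ψ (x * d ^ 2) := by
    intro d
    rw [← AddChar.map_add_eq_mul]
    congr 1
    simp only [Equiv.coe_addRight]
    field_simp
    ring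
  simp only [this]
  rw [← Finset.mul_sum, sum_sq h2 (fun t => ψ (x * t)), gauss_shift h2]
  have h0 : ∑ t : K, ψ (x * t) = 0 := by
    have := Equiv.sum_comp (Equiv.mulLeft₀ x hx) (fun x => ψ x)
    simp only [mulLeft₀_coe'] at this
    rw [this, AddChar.sum_eq_zero_of_ne_one hψ]
  rw [h0]; ring

lemma sum_eta_sq_sub (h2 : ringChar K ≠ 2) (e : K) (he : e ≠ 0) :
    ∑ z : K, etaQ K (z ^ 2 - e) = -1 := by
  rw [sum_sq h2 (fun t => etaQ K (t - e))]
  have h1 : ∑ t : K, etaQ K (t - e) = 0 := by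
    have := Equiv.sum_comp (Equiv.subRight e) (fun x => etaQ K x)
    simp only [Equiv.subRight_apply] at this
    rw [this, etaQ_sum h2]
  have h3 : ∀ t : K, etaQ K t * etaQ K (t - e) = etaQ K (1 - e * t⁻¹) - if t = 0 then 1 else 0 := by
    intro t
    by_cases ht : t = 0
    · simp [ht, etaQ_zero, etaQ_one]
    · have : t * (t - e) = t ^ 2 * (1 - e * t⁻¹) := by field_simp
      rw [← etaQ_mul, this, etaQ_mul, etaQ_sq t ht]
      simp [ht]
  simp only [h3, h1, Finset.sum_sub_distrib]
  have h4 : ∑ t : K, etaQ K (1 - e * t⁻¹) = 0 := by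
    have := Equiv.sum_comp ((inv_equiv K).trans ((Equiv.mulLeft₀ e he).trans (Equiv.subLeft 1)))
      (fun x => etaQ K x)
    simp only [Equiv.trans_apply, mulLeft₀_coe', Equiv.subLeft_apply, inv_equiv_apply] at this
    rw [this, etaQ_sum h2]
  rw [h4]
  simp

lemma sum_eta_quad (h2 : ringChar K ≠ 2) (A B C : K) (hA : A ≠ 0) (hD : A * C ≠ B ^ 2) :
    ∑ z : K, etaQ K (A * z ^ 2 + 2 * B * z + C) = - etaQ K A := by
  rw [← Equiv.sum_comp (Equiv.addRight (-B / A))]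
  have : ∀ d : K, etaQ K (A * (Equiv.addRight (-B / A) d) ^ 2
      + 2 * B * (Equiv.addRight (-B / A) d) + C)
      = etaQ K A * etaQ K (d ^ 2 - (B ^ 2 - A * C) / A ^ 2) := by
    intro d
    rw [← etaQ_mul]
    congr 1
    simp only [Equiv.coe_addRight]
    field_simp
    ring
  simp only [this]
  rw [← Finset.mul_sum, sum_eta_sq_sub h2, mul_neg_one]
  exact div_ne_zero (sub_ne_zero.mpr (Ne.symm hD)) (pow_ne_zero _ hA)

lemma sum_eta_quad_deg (A B C : K) (hA : A ≠ 0) (hD : A * C = B ^ 2) :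
    ∑ z : K, etaQ K (A * z ^ 2 + 2 * B * z + C) = etaQ K A * ((Fintype.card K : ℂ) - 1) := by
  rw [← Equiv.sum_comp (Equiv.addRight (-B / A))]
  have : ∀ d : K, etaQ K (A * (Equiv.addRight (-B / A) d) ^ 2
      + 2 * B * (Equiv.addRight (-B / A) d) + C)
      = etaQ K A * (1 - if d = 0 then 1 else 0) := by
    intro d
    have : A * (Equiv.addRight (-B / A) d) ^ 2
      + 2 * B * (Equiv.addRight (-B / A) d) + C = A * d ^ 2 := by
      have hC : C = B ^ 2 / A := by rw [← hD]; field_simp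
      simp only [Equiv.coe_addRight, hC]
      field_simp
      ring
    rw [this, etaQ_mul]
    by_cases hd : d = 0
    · simp [hd, etaQ_zero]
    · simp [hd, etaQ_sq]
  simp only [this]
  rw [← Finset.mul_sum]
  simp

lemma sum_eta_lin (h2 : ringChar K ≠ 2) (B C : K) (hB : B ≠ 0) :
    ∑ z : K, etaQ K (2 * B * z + C) = 0 := by
  have two : (2 : K) ≠ 0 := Ring.two_ne_zero h2
  have := Equiv.sum_comp ((Equiv.mulLeft₀ (2 * B) (mul_ne_zero two hB)).trans (Equiv.addRight C))
      (fun x => etaQ K x)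
  simp only [Equiv.trans_apply, mulLeft₀_coe', Equiv.coe_addRight] at this
  rw [this, etaQ_sum h2]

lemma sum_ne_zero (f : K → ℂ) [DecidablePred fun x : K => x ≠ 0] :
    ∑ x ∈ univ.filter (fun x : K => x ≠ 0), f x = ∑ x, f x - f 0 := by
  rw [← Finset.sum_erase_add univ f (Finset.mem_univ 0), add_sub_cancel_right]
  refine Finset.sum_congr ?_ fun _ _ => rfl
  ext x
  simp

end aux

lemma chiBar_eq (p : ℕ) [Fact p.Prime] (c : ZMod p) : chiBar p c = ZMod.stdAddChar c := by
  have h : ((c.val : ℤ) : ZMod p) = c := by simp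
  conv_rhs => rw [← h, ZMod.stdAddChar_coe]
  rw [chiBar, zeta, ← Complex.exp_nat_mul]
  congr 1
  push_cast
  ring

lemma etaQ_algebraMap (p m : ℕ) [Fact (Nat.Prime p)]
    (F : Type) [Field F] [Fintype F] [Algebra (ZMod p) F]
    (hq : Fintype.card F = p ^ m) (hmodd : Odd m) (c : ZMod p) :
    etaQ F (algebraMap (ZMod p) F c) = etaQ (ZMod p) c := by
  by_cases hc : c = 0
  · simp [hc, etaQ_zero]
  have hc' : algebraMap (ZMod p) F c ≠ 0 := by simpa using hc
  have hfin : Module.finrank (ZMod p) F = m := by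
    have h := Module.card_eq_pow_finrank (K := ZMod p) (V := F)
    rw [hq, ZMod.card] at h
    exact (Nat.pow_right_injective (Fact.out : p.Prime).two_le h).symm
  have key : IsSquare (algebraMap (ZMod p) F c) ↔ IsSquare c := by
    constructor
    · intro h
      have h1 := h.map (Algebra.norm (ZMod p))
      rw [Algebra.norm_algebraMap, hfin] at h1
      obtain ⟨k, rfl⟩ := hmodd
      obtain ⟨r, hr⟩ := h1
      refine ⟨r / c ^ k, ?_⟩
      field_simp
      rw [sq r, ← hr]; ring
    · intro h
      exact h.map (algebraMap (ZMod p) F)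
  simp only [etaQ, hc, hc', key, if_false]
  split_ifs <;> rfl

/-- The additive character `chiQ` as a bundled one. -/
def psiF (p : ℕ) [Fact (Nat.Prime p)] (F : Type) [Field F] [Algebra (ZMod p) F] : AddChar F ℂ :=
  (ZMod.stdAddChar (N := p)).compAddMonoidHom (Algebra.trace (ZMod p) F).toAddMonoidHom

lemma psiF_apply (p : ℕ) [Fact (Nat.Prime p)] (F : Type) [Field F] [Algebra (ZMod p) F] (x : F) :
    psiF p F x = ZMod.stdAddChar (Trq p F x) := rfl

lemma psiF_ne_one (p : ℕ) [Fact (Nat.Prime p)] (F : Type) [Field F] [Fintype F]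
    [Algebra (ZMod p) F] : psiF p F ≠ 1 := by
  intro h
  apply Algebra.trace_ne_zero (ZMod p) F
  ext x
  have h1 : psiF p F x = 1 := by rw [h]; rfl
  rw [psiF_apply, ← (ZMod.stdAddChar (N := p)).map_zero_eq_one,
    ZMod.injective_stdAddChar.eq_iff] at h1
  exact h1

lemma Omega4_master (p m : ℕ) [Fact (Nat.Prime p)] (hp : Odd p)
    (F : Type) [Field F] [Fintype F] [Algebra (ZMod p) F]
    (hq : Fintype.card F = p ^ m)
    (hmodd : Odd m) (a b : F)
    (α β γ : ZMod p) (hα : α = Trq p F (a ^ 2)) (hβ : β = Trq p F (b ^ 2))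
    (hγ : γ = Trq p F (a * b)) :
      (∑ d : F,
      (∑ x ∈ univ.filter (fun x : ZMod p => x ≠ 0), chiBar p (x * Trq p F (d ^ 2))) *
      (∑ y ∈ univ.filter (fun y : ZMod p => y ≠ 0), chiBar p (y * Trq p F (a * d))) *
      (∑ z ∈ univ.filter (fun z : ZMod p => z ≠ 0), chiBar p (z * Trq p F (b * d)))) =
      (∑ z, etaQ (ZMod p) ((-β) * z ^ 2 + 2 * (-γ) * z + (-α)) - etaQ (ZMod p) (-α))
       * ((p : ℂ) - 1) * (GaussQ p F * GaussP p) := by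
  have hp2 : ringChar (ZMod p) ≠ 2 := by
    rw [ZMod.ringChar_zmod_n]; rintro rfl; exact absurd hp (by decide)
  have hF2 : ringChar F ≠ 2 := by
    rw [← Algebra.ringChar_eq (ZMod p) F]; exact hp2
  have hGQ : ∑ t : F, etaQ F t * psiF p F t = GaussQ p F := by
    rw [GaussQ, sum_ne_zero]
    simp [etaQ_zero, psiF_apply, chiQ, chiBar_eq]
  have hGP : ∑ t : ZMod p, etaQ (ZMod p) t * ZMod.stdAddChar t = GaussP p := by
    rw [GaussP, sum_ne_zero]
    simp [etaQ_zero, etaBar_eq, chiBar_eq]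
  have two : (2 : ZMod p) ≠ 0 := Ring.two_ne_zero hp2
  have four : (4 : ZMod p) ≠ 0 := by
    have : (4 : ZMod p) = 2 * 2 := by norm_num
    rw [this]; exact mul_ne_zero two two
  -- sum over `d`
  have hd : ∀ x y z : ZMod p, x ≠ 0 →
      ∑ d : F, chiBar p (x * Trq p F (d ^ 2)) * chiBar p (y * Trq p F (a * d)) *
        chiBar p (z * Trq p F (b * d)) =
      etaQ (ZMod p) x * ZMod.stdAddChar
        ((-(y ^ 2 * α + 2 * y * z * γ + z ^ 2 * β) / 4) * x⁻¹) * GaussQ p F := by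
    intro x y z hx
    have hx' : algebraMap (ZMod p) F x ≠ 0 := by simpa using hx
    have h := quad_gauss hF2 (psiF p F) (psiF_ne_one p F) (algebraMap (ZMod p) F x)
      (algebraMap (ZMod p) F y * a + algebraMap (ZMod p) F z * b) hx'
    rw [hGQ, etaQ_algebraMap p m F hq hmodd] at h
    have e1 : psiF p F (-(algebraMap (ZMod p) F y * a + algebraMap (ZMod p) F z * b) ^ 2
        / (4 * algebraMap (ZMod p) F x)) = ZMod.stdAddChar
        ((-(y ^ 2 * α + 2 * y * z * γ + z ^ 2 * β) / 4) * x⁻¹) := by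
      rw [psiF_apply]
      congr 1
      have : -(algebraMap (ZMod p) F y * a + algebraMap (ZMod p) F z * b) ^ 2
        / (4 * algebraMap (ZMod p) F x) =
        (-(y ^ 2) / (4 * x)) • (a ^ 2) + (-(2 * y * z) / (4 * x)) • (a * b)
          + (-(z ^ 2) / (4 * x)) • (b ^ 2) := by
        simp only [Algebra.smul_def, map_div₀, map_neg, map_mul, map_pow, map_ofNat]
        ring
      rw [this, hα, hβ, hγ]
      simp only [Trq, map_add, map_smul, smul_eq_mul]
      field_simp
      ring
    rw [e1] at h
    rw [← h]
    refine Finset.sum_congr rfl fun d _ => ?_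
    rw [chiBar_eq, chiBar_eq, chiBar_eq, ← AddChar.map_add_eq_mul, ← AddChar.map_add_eq_mul,
      psiF_apply]
    congr 1
    have : algebraMap (ZMod p) F x * d ^ 2
        + (algebraMap (ZMod p) F y * a + algebraMap (ZMod p) F z * b) * d
        = x • d ^ 2 + y • (a * d) + z • (b * d) := by
      simp only [Algebra.smul_def]; ring
    rw [this]
    simp only [Trq, map_add, map_smul, smul_eq_mul]
  -- sum over `x`
  have hx : ∀ Q : ZMod p, ∑ x ∈ univ.filter (fun x : ZMod p => x ≠ 0),
      etaQ (ZMod p) x * ZMod.stdAddChar ((-Q / 4) * x⁻¹) * GaussQ p F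
      = etaQ (ZMod p) (-Q) * (GaussQ p F * GaussP p) := by
    intro Q
    rw [sum_ne_zero, etaQ_zero, ← Equiv.sum_comp (inv_equiv (ZMod p))]
    simp only [inv_equiv_apply, inv_inv, etaQ_inv]
    rw [← Finset.sum_mul, gauss_shift hp2, hGP]
    have : -Q / 4 = -Q * (2⁻¹) ^ 2 := by
      field_simp; norm_num
    rw [this, etaQ_mul, etaQ_sq _ (inv_ne_zero two)]
    ring
  have e0 : (∑ d : F,
      (∑ x ∈ univ.filter (fun x : ZMod p => x ≠ 0), chiBar p (x * Trq p F (d ^ 2))) *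
      (∑ y ∈ univ.filter (fun y : ZMod p => y ≠ 0), chiBar p (y * Trq p F (a * d))) *
      (∑ z ∈ univ.filter (fun z : ZMod p => z ≠ 0), chiBar p (z * Trq p F (b * d)))) =
      ∑ y ∈ univ.filter (fun y : ZMod p => y ≠ 0), ∑ z ∈ univ.filter (fun z : ZMod p => z ≠ 0),
      ∑ x ∈ univ.filter (fun x : ZMod p => x ≠ 0), ∑ d : F,
        chiBar p (x * Trq p F (d ^ 2)) * chiBar p (y * Trq p F (a * d)) *
        chiBar p (z * Trq p F (b * d)) := by
    have r1 : ∀ y z : ZMod p, (∑ x ∈ univ.filter (fun x : ZMod p => x ≠ 0), ∑ d : F,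
        chiBar p (x * Trq p F (d ^ 2)) * chiBar p (y * Trq p F (a * d)) *
        chiBar p (z * Trq p F (b * d))) = ∑ d : F, ∑ x ∈ univ.filter (fun x : ZMod p => x ≠ 0),
        chiBar p (x * Trq p F (d ^ 2)) * chiBar p (y * Trq p F (a * d)) *
        chiBar p (z * Trq p F (b * d)) := fun y z => Finset.sum_comm
    simp only [r1]
    rw [Finset.sum_congr rfl fun y _ => Finset.sum_comm, Finset.sum_comm]
    refine Finset.sum_congr rfl fun d _ => ?_
    simp only [← Finset.sum_mul, ← Finset.mul_sum]
  rw [e0]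
  have e1 : ∀ y ∈ univ.filter (fun y : ZMod p => y ≠ 0),
      (∑ z ∈ univ.filter (fun z : ZMod p => z ≠ 0),
      ∑ x ∈ univ.filter (fun x : ZMod p => x ≠ 0), ∑ d : F,
        chiBar p (x * Trq p F (d ^ 2)) * chiBar p (y * Trq p F (a * d)) *
        chiBar p (z * Trq p F (b * d))) =
      (∑ z, etaQ (ZMod p) ((-β) * z ^ 2 + 2 * (-γ) * z + (-α)) - etaQ (ZMod p) (-α))
        * (GaussQ p F * GaussP p) := by
    intro y hy
    have hy : y ≠ 0 := by simpa using hy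
    have s1 : ∀ z : ZMod p, (∑ x ∈ univ.filter (fun x : ZMod p => x ≠ 0), ∑ d : F,
        chiBar p (x * Trq p F (d ^ 2)) * chiBar p (y * Trq p F (a * d)) *
        chiBar p (z * Trq p F (b * d))) =
        etaQ (ZMod p) (-(y ^ 2 * α + 2 * y * z * γ + z ^ 2 * β)) * (GaussQ p F * GaussP p) := by
      intro z
      rw [← hx]
      refine Finset.sum_congr rfl fun x hx => ?_
      rw [hd x y z (by simpa using hx)]
    simp only [s1]
    rw [← Finset.sum_mul, sum_ne_zero, ← Equiv.sum_comp (Equiv.mulLeft₀ y hy)]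
    congr 2
    · refine Finset.sum_congr rfl fun z _ => ?_
      rw [← one_mul (etaQ (ZMod p) (-β * _ + _ + _)), ← etaQ_sq y hy, ← etaQ_mul]
      congr 1
      simp only [mulLeft₀_coe']
      ring
    · rw [← one_mul (etaQ (ZMod p) (-α)), ← etaQ_sq y hy, ← etaQ_mul]
      congr 1
      ring
  rw [Finset.sum_congr rfl e1, sum_ne_zero]
  simp only [Finset.sum_const, Finset.card_univ, ZMod.card, nsmul_eq_mul]
  ring

theorem Omega4_eval_m_odd (p m : ℕ) [Fact (Nat.Prime p)] (hp : Odd p)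
    (F : Type) [Field F] [Fintype F] [Algebra (ZMod p) F]
    (hm : 0 < m) (hq : Fintype.card F = p ^ m)
    (hmodd : Odd m) (a b : F) (ha : a ≠ 0) (hb : b ≠ 0)
    (hab : ∀ w : ZMod p, w ≠ 0 → a ≠ algebraMap (ZMod p) F w * b)
    (α β γ : ZMod p) (hα : α = Trq p F (a ^ 2)) (hβ : β = Trq p F (b ^ 2))
    (hγ : γ = Trq p F (a * b)) :
    (α = 0 ∧ β = 0 →
      (∑ d : F,
      (∑ x ∈ univ.filter (fun x : ZMod p => x ≠ 0), chiBar p (x * Trq p F (d ^ 2))) *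
      (∑ y ∈ univ.filter (fun y : ZMod p => y ≠ 0), chiBar p (y * Trq p F (a * d))) *
      (∑ z ∈ univ.filter (fun z : ZMod p => z ≠ 0), chiBar p (z * Trq p F (b * d)))) = 0) ∧
    (β ≠ 0 ∧ α = 0 ∧ γ = 0 →
      (∑ d : F,
      (∑ x ∈ univ.filter (fun x : ZMod p => x ≠ 0), chiBar p (x * Trq p F (d ^ 2))) *
      (∑ y ∈ univ.filter (fun y : ZMod p => y ≠ 0), chiBar p (y * Trq p F (a * d))) *
      (∑ z ∈ univ.filter (fun z : ZMod p => z ≠ 0), chiBar p (z * Trq p F (b * d)))) = etaBar p (-β) * ((p : ℂ) - 1) ^ 2 * (GaussQ p F * GaussP p)) ∧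
    (α = 0 ∧ β ≠ 0 ∧ γ ≠ 0 →
      (∑ d : F,
      (∑ x ∈ univ.filter (fun x : ZMod p => x ≠ 0), chiBar p (x * Trq p F (d ^ 2))) *
      (∑ y ∈ univ.filter (fun y : ZMod p => y ≠ 0), chiBar p (y * Trq p F (a * d))) *
      (∑ z ∈ univ.filter (fun z : ZMod p => z ≠ 0), chiBar p (z * Trq p F (b * d)))) = -(etaBar p (-β) * ((p : ℂ) - 1) * (GaussQ p F * GaussP p))) ∧
    (α ≠ 0 ∧ β = 0 ∧ γ = 0 →
      (∑ d : F,
      (∑ x ∈ univ.filter (fun x : ZMod p => x ≠ 0), chiBar p (x * Trq p F (d ^ 2))) *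
      (∑ y ∈ univ.filter (fun y : ZMod p => y ≠ 0), chiBar p (y * Trq p F (a * d))) *
      (∑ z ∈ univ.filter (fun z : ZMod p => z ≠ 0), chiBar p (z * Trq p F (b * d)))) = etaBar p (-α) * ((p : ℂ) - 1) ^ 2 * (GaussQ p F * GaussP p)) ∧
    (α ≠ 0 ∧ β = 0 ∧ γ ≠ 0 →
      (∑ d : F,
      (∑ x ∈ univ.filter (fun x : ZMod p => x ≠ 0), chiBar p (x * Trq p F (d ^ 2))) *
      (∑ y ∈ univ.filter (fun y : ZMod p => y ≠ 0), chiBar p (y * Trq p F (a * d))) *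
      (∑ z ∈ univ.filter (fun z : ZMod p => z ≠ 0), chiBar p (z * Trq p F (b * d)))) = -(etaBar p (-α) * ((p : ℂ) - 1) * (GaussQ p F * GaussP p))) ∧
    (α ≠ 0 ∧ β ≠ 0 ∧ α * β = γ ^ 2 →
      (∑ d : F,
      (∑ x ∈ univ.filter (fun x : ZMod p => x ≠ 0), chiBar p (x * Trq p F (d ^ 2))) *
      (∑ y ∈ univ.filter (fun y : ZMod p => y ≠ 0), chiBar p (y * Trq p F (a * d))) *
      (∑ z ∈ univ.filter (fun z : ZMod p => z ≠ 0), chiBar p (z * Trq p F (b * d)))) = (etaBar p (-β) * ((p : ℂ) - 1) - etaBar p (-α)) * ((p : ℂ) - 1) * (GaussQ p F * GaussP p)) ∧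
    (α ≠ 0 ∧ β ≠ 0 ∧ α * β ≠ γ ^ 2 →
      (∑ d : F,
      (∑ x ∈ univ.filter (fun x : ZMod p => x ≠ 0), chiBar p (x * Trq p F (d ^ 2))) *
      (∑ y ∈ univ.filter (fun y : ZMod p => y ≠ 0), chiBar p (y * Trq p F (a * d))) *
      (∑ z ∈ univ.filter (fun z : ZMod p => z ≠ 0), chiBar p (z * Trq p F (b * d)))) = -((etaBar p (-β) + etaBar p (-α)) * ((p : ℂ) - 1) * (GaussQ p F * GaussP p))) := by
  rw [Omega4_master p m hp F hq hmodd a b α β γ hα hβ hγ]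
  have hp2 : ringChar (ZMod p) ≠ 2 := by
    rw [ZMod.ringChar_zmod_n]; rintro rfl; exact absurd hp (by decide)
  have quad := sum_eta_quad hp2 (-β) (-γ) (-α)
  have deg := sum_eta_quad_deg (-β) (-γ) (-α)
  have lin := sum_eta_lin hp2 (-γ) (-α)
  rw [ZMod.card] at deg
  simp only [etaBar_eq]
  refine ⟨?_, ?_, ?_, ?_, ?_, ?_, ?_⟩
  · rintro ⟨h1, h2⟩
    by_cases hg : γ = 0
    · simp [h1, h2, hg, etaQ_zero]
    · have := lin (neg_ne_zero.mpr hg)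
      subst h1 h2
      simp only [neg_zero, zero_mul, zero_add, etaQ_zero] at this ⊢
      rw [this]; ring
  · rintro ⟨h1, h2, h3⟩
    rw [deg (neg_ne_zero.mpr h1) (by simp [h2, h3]), h2, neg_zero, etaQ_zero]
    ring
  · rintro ⟨h1, h2, h3⟩
    rw [quad (neg_ne_zero.mpr h2) (by
      rw [h1, neg_zero, mul_zero]
      exact (pow_ne_zero 2 (neg_ne_zero.mpr h3)).symm), h1, neg_zero, etaQ_zero]
    ring
  · rintro ⟨h1, h2, h3⟩
    simp only [h2, h3, neg_zero, zero_mul, zero_add, mul_zero, Finset.sum_const, Finset.card_univ,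
      ZMod.card, nsmul_eq_mul]
    ring
  · rintro ⟨h1, h2, h3⟩
    have := lin (neg_ne_zero.mpr h3)
    simp only [h2, neg_zero, zero_mul, zero_add]
    rw [this]; ring
  · rintro ⟨h1, h2, h3⟩
    rw [deg (neg_ne_zero.mpr h2) (by linear_combination h3)]
  · rintro ⟨h1, h2, h3⟩
    rw [quad (neg_ne_zero.mpr h2) (fun h => h3 (by linear_combination h))]
    ring
end
end
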